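/- arXiv:1503.05863 — 2 statements merged into one kernel-verified Lean document; each statement's English description precedes it below -/
import Mathlib

section
/- Let d ≥ 1, 1 < p ≤ 2, and k = 2d(1/p − 1/2). There exists a constant C > 0 such that for every Schwartz function f on ℝ^d: ‖V_g f‖_{L^p(ℝ^{2d})} ≤ C·‖(1−Δ)^{k/2} f‖_{L^p(ℝ^d)}. -/
open MeasureTheory Complex Real
open scoped ENNReal RealInnerProductSpace

noncomputable section

abbrev E (d : ℕ) : Type := EuclideanSpace ℝ (Fin d)

/-- Phase space `ℝ^{2d} = ℝ^d × ℝ^d`. -/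
abbrev P (d : ℕ) : Type := E d × E d

/-- The complex conjugate of the wave packet `π(z)g`, Gaussian window `g(y)=exp(-|y|²/2)`. -/
def pkbar (d : ℕ) (z : P d) (y : E d) : ℂ :=
  Complex.exp (-Complex.I * (⟪y, z.2⟫ : ℂ)) * Real.exp (-‖y - z.1‖ ^ 2 / 2)

/-- The short-time Fourier transform with Gaussian window. -/
def stft (d : ℕ) (u : E d → ℂ) (z : P d) : ℂ := ∫ y, u y * pkbar d z y

/-- The Fourier transform `ℱu(ξ) = ∫ exp(-i x·ξ) u(x) dx`. -/
def FT (d : ℕ) (u : E d → ℂ) (ξ : E d) : ℂ :=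
  ∫ x, Complex.exp (-Complex.I * (⟪x, ξ⟫ : ℂ)) * u x

/-- The Bessel potential `(1-Δ)^{k/2} u = ℱ⁻¹((1+|ξ|²)^{k/2} ℱu)`. -/
def bessel (d : ℕ) (k : ℝ) (u : E d → ℂ) (x : E d) : ℂ :=
  (((2 * π) ^ d : ℝ) : ℂ)⁻¹ *
    ∫ ξ, Complex.exp (Complex.I * (⟪x, ξ⟫ : ℂ)) * (((1 + ‖ξ‖ ^ 2) ^ (k / 2) : ℝ) : ℂ) *
      FT d u ξ

section GaussianStft

open Set Filter FourierTransform

lemma lintegral_comp_smul_euclidean (d : ℕ) (f : E d → ℝ≥0∞) {c : ℝ} (hc : 0 < c) :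
    ∫⁻ x, f (c • x) = ENNReal.ofReal ((c ^ d)⁻¹) * ∫⁻ x, f x := by
  have h := lintegral_map_equiv (μ := (volume : Measure (E d))) f
    (Homeomorph.smulOfNeZero c hc.ne').toMeasurableEquiv
  have h2 : Measure.map (⇑(Homeomorph.smulOfNeZero c hc.ne').toMeasurableEquiv) volume
    = ENNReal.ofReal |(c ^ Module.finrank ℝ (E d))⁻¹| • (volume : Measure (E d)) :=
    Measure.map_addHaar_smul volume hc.ne'
  rw [h2, lintegral_smul_measure, smul_eq_mul, finrank_euclideanSpace_fin,
    abs_of_pos (by positivity)] at h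
  exact h.symm

lemma FT_eq_fourier (d : ℕ) (u : E d → ℂ) (ξ : E d) : FT d u ξ = 𝓕 u ((2 * π)⁻¹ • ξ) := by
  rw [Real.fourier_eq', FT]
  congr 1 with x
  rw [smul_eq_mul, real_inner_smul_right]
  congr 2
  push_cast
  field_simp

lemma fourier_ae_eq_toLp (d : ℕ) {F : E d → ℂ} (h1 : Integrable F) (h2 : MemLp F 2) :
    ((𝓕 (h2.toLp F) : Lp (α := E d) ℂ 2) : E d → ℂ) =ᵐ[volume] 𝓕 F := by
  apply ae_eq_of_integral_contDiff_smul_eq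
  · exact (Lp.memLp _).locallyIntegrable (by norm_num)
  · have : Continuous (𝓕 F) := VectorFourier.fourierIntegral_continuous continuous_fourierChar
      continuous_inner h1
    exact this.locallyIntegrable
  intro g hg hgs
  have hgs' : HasCompactSupport (fun x => (g x : ℂ)) :=
    hgs.comp_left (g := Complex.ofReal) (by simp)
  have hg' : ContDiff ℝ (⊤ : ℕ∞) (fun x => (g x : ℂ)) := Complex.ofRealCLM.contDiff.comp hg
  set φ : SchwartzMap (E d) ℂ := hgs'.toSchwartzMap hg'
  have hφ (x) : φ x = g x := rfl
  have e1 := congrArg (· φ) (Lp.fourier_toTemperedDistribution_eq (h2.toLp F))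
  simp only [TemperedDistribution.fourier_apply, Lp.toTemperedDistribution_apply] at e1
  have e2 : ∫ x, 𝓕 F x • φ x = ∫ x, F x • 𝓕 (φ : E d → ℂ) x := by
    simpa using! VectorFourier.integral_fourierIntegral_smul_eq_flip (L := innerₗ (E d))
      continuous_fourierChar continuous_inner h1 φ.integrable
  simp only [← Complex.coe_smul, ← hφ]
  rw [← e1]
  simp only [smul_eq_mul] at e2 ⊢
  simp only [mul_comm (φ _)]
  rw [e2]
  refine integral_congr_ae ?_
  filter_upwards [h2.coeFn_toLp] with x hx
  rw [hx, SchwartzMap.fourier_coe, mul_comm]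

lemma plancherel_FT (d : ℕ) {F : E d → ℂ} (h1 : Integrable F) (h2 : MemLp F 2) :
    ∫⁻ ξ, ‖FT d F ξ‖ₑ ^ (2 : ℝ) = ENNReal.ofReal ((2 * π) ^ d) * ∫⁻ x, ‖F x‖ₑ ^ (2 : ℝ) := by
  simp_rw [FT_eq_fourier]
  rw [lintegral_comp_smul_euclidean d (fun x => ‖𝓕 F x‖ₑ ^ (2 : ℝ)) (by positivity)]
  congr 1
  · congr 1
    rw [inv_pow, inv_inv]
  have h := Lp.norm_fourier_eq (h2.toLp F)
  have e1 : eLpNorm (𝓕 F) 2 volume = eLpNorm F 2 volume := by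
    rw [← eLpNorm_congr_ae (fourier_ae_eq_toLp d h1 h2), ← eLpNorm_congr_ae h2.coeFn_toLp]
    rw [Lp.norm_def, Lp.norm_def] at h
    exact (ENNReal.toReal_eq_toReal_iff' (Lp.eLpNorm_ne_top _) (Lp.eLpNorm_ne_top _)).1 h
  have e2 := congrArg (· ^ (2 : ℝ)) e1
  have key (u : E d → ℂ) : eLpNorm u 2 volume ^ (2 : ℝ) = ∫⁻ x, ‖u x‖ₑ ^ (2 : ℝ) := by
    rw [eLpNorm_eq_lintegral_rpow_enorm_toReal (by norm_num) (by norm_num), ← ENNReal.rpow_mul]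
    simp
  simpa only [key] using e2

lemma lintegral_japanese_tail_le (d : ℕ) (hd : 1 ≤ d) : ∃ C : ℝ≥0∞, C ≠ ⊤ ∧ ∀ s : ℝ, 0 < s →
    ∫⁻ ξ in {ξ : E d | s < (1 + ‖ξ‖ ^ 2) ^ ((d : ℝ) / 2)},
      ENNReal.ofReal (((1 + ‖ξ‖ ^ 2) ^ d)⁻¹) ≤ C * ENNReal.ofReal s⁻¹ := by
  have hd0 : (0 : ℝ) < d := by exact_mod_cast hd
  have hint : Integrable (fun ξ : E d => ((1 + ‖ξ‖ ^ 2) ^ d)⁻¹) := by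
    have h := integrable_rpow_neg_one_add_norm_sq (E := E d) (μ := volume) (r := 2 * d)
      (by rw [finrank_euclideanSpace_fin]; linarith)
    refine h.congr (Eventually.of_forall fun ξ => ?_)
    simp only
    rw [show -(2 * (d : ℝ)) / 2 = -(d : ℝ) by ring, Real.rpow_neg (by positivity),
      Real.rpow_natCast]
  set J := ∫⁻ ξ : E d, ENNReal.ofReal (((1 + ‖ξ‖ ^ 2) ^ d)⁻¹) with hJ
  have hJt : J ≠ ⊤ := hint.lintegral_lt_top.ne
  refine ⟨ENNReal.ofReal (2 ^ d) * J, ENNReal.mul_ne_top (by simp) hJt, fun s hs => ?_⟩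
  set R := s ^ (1 / (d : ℝ)) with hR
  have hR0 : 0 < R := by positivity
  have hRd : R ^ d = s := by
    rw [hR, ← Real.rpow_natCast, ← Real.rpow_mul hs.le, one_div_mul_cancel hd0.ne', Real.rpow_one]
  calc _ ≤ ∫⁻ ξ : E d in {ξ : E d | s < (1 + ‖ξ‖ ^ 2) ^ ((d : ℝ) / 2)},
        ENNReal.ofReal (2 ^ d * (R ^ (2 * d))⁻¹) *
          ENNReal.ofReal (((1 + ‖R⁻¹ • ξ‖ ^ 2) ^ d)⁻¹) := by
        refine setLIntegral_mono (by fun_prop) fun ξ hξ => ?_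
        rw [← ENNReal.ofReal_mul (by positivity)]
        apply ENNReal.ofReal_le_ofReal
        have h1 : R ^ 2 < 1 + ‖ξ‖ ^ 2 := by
          by_contra! hcon
          have := Real.rpow_le_rpow (by positivity) hcon (z := (d : ℝ) / 2) (by positivity)
          have h3 : (R ^ 2) ^ ((d : ℝ) / 2) = s := by
            rw [← hRd, ← Real.rpow_natCast R 2, ← Real.rpow_mul hR0.le, ← Real.rpow_natCast R d]
            congr 1; push_cast; ring
          rw [h3] at this
          exact absurd hξ (not_lt.2 this)
        rw [norm_smul, Real.norm_of_nonneg (by positivity), pow_mul, ← inv_pow, ← inv_pow,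
          ← mul_pow, ← inv_pow (1 + _), ← mul_pow]
        refine pow_le_pow_left₀ (by positivity) ?_ _
        rw [mul_assoc, ← mul_inv, mul_pow, ← div_eq_mul_inv, inv_le_comm₀ (by positivity)
          (by positivity), inv_div]
        have : R ^ 2 * (1 + R⁻¹ ^ 2 * ‖ξ‖ ^ 2) = R ^ 2 + ‖ξ‖ ^ 2 := by
          field_simp
        rw [this]
        linarith [sq_nonneg ‖ξ‖]
    _ ≤ ∫⁻ ξ : E d, ENNReal.ofReal (2 ^ d * (R ^ (2 * d))⁻¹) *
          ENNReal.ofReal (((1 + ‖R⁻¹ • ξ‖ ^ 2) ^ d)⁻¹) := setLIntegral_le_lintegral _ _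
    _ = ENNReal.ofReal (2 ^ d) * J * ENNReal.ofReal s⁻¹ := by
        rw [lintegral_const_mul _ (by fun_prop), lintegral_comp_smul_euclidean d
          (fun ξ => ENNReal.ofReal (((1 + ‖ξ‖ ^ 2) ^ d)⁻¹)) (inv_pos.2 hR0), ← hJ,
          ← mul_assoc, ← ENNReal.ofReal_mul (by positivity),
          mul_right_comm _ J, ← ENNReal.ofReal_mul (by positivity)]
        congr 2
        rw [inv_pow, inv_inv, pow_mul', hRd]
        field_simp

lemma lintegral_Ioo_rpow_mul {a p : ℝ} (ha : 0 ≤ a) (hp : 1 < p) :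
    (∫⁻ t in Ioo 0 a, ENNReal.ofReal (t ^ (p - 2))) * ENNReal.ofReal a
      = ENNReal.ofReal (p - 1)⁻¹ * ENNReal.ofReal (a ^ p) := by
  have h0 : IntervalIntegrable (fun t : ℝ => t ^ (p - 2)) volume 0 a :=
    intervalIntegral.intervalIntegrable_rpow' (by linarith)
  rw [intervalIntegrable_iff_integrableOn_Ioo_of_le ha] at h0
  rw [← ofReal_integral_eq_lintegral_ofReal h0
    (by filter_upwards [ae_restrict_mem measurableSet_Ioo] with t ht
        exact Real.rpow_nonneg ht.1.le _),
    ← integral_Ioc_eq_integral_Ioo, ← intervalIntegral.integral_of_le ha,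
    integral_rpow (Or.inl (by linarith)), Real.zero_rpow (by linarith), sub_zero,
    ← ENNReal.ofReal_mul' ha, ← ENNReal.ofReal_mul (inv_nonneg.2 (by linarith))]
  congr 1
  rw [show p - 2 + 1 = p - 1 by ring]
  rcases ha.eq_or_lt with rfl | ha
  · rw [Real.zero_rpow (by linarith : p ≠ 0)]; simp
  · rw [Real.rpow_sub ha, Real.rpow_one]; field_simp

lemma lintegral_Ici_rpow_mul {a p : ℝ} (ha : 0 ≤ a) (hp : 0 < p) (hp2 : p < 2) :
    (∫⁻ t in Ioi 0 ∩ Ici a, ENNReal.ofReal (t ^ (p - 3))) * ENNReal.ofReal (a ^ 2)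
      = ENNReal.ofReal (2 - p)⁻¹ * ENNReal.ofReal (a ^ p) := by
  rcases ha.eq_or_lt with rfl | ha
  · simp [Real.zero_rpow hp.ne']
  have hs : Ioi 0 ∩ Ici a = Ici a := inter_eq_right.2 fun t ht => ha.trans_le ht
  rw [hs, setLIntegral_congr Ioi_ae_eq_Ici.symm]
  have h0 : IntegrableOn (fun t : ℝ => t ^ (p - 3)) (Ioi a) :=
    integrableOn_Ioi_rpow_of_lt (by linarith) ha
  rw [← ofReal_integral_eq_lintegral_ofReal h0
    (by filter_upwards [ae_restrict_mem measurableSet_Ioi] with t ht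
        exact Real.rpow_nonneg (ha.trans ht).le _), integral_Ioi_rpow_of_lt (by linarith) ha,
    ← ENNReal.ofReal_mul' (by positivity), ← ENNReal.ofReal_mul (inv_nonneg.2 (by linarith))]
  congr 1
  rw [show p - 3 + 1 = p - 2 by ring, Real.rpow_sub ha, Real.rpow_two]
  have : p - 2 ≠ 0 := by linarith
  have : 2 - p ≠ 0 := by linarith
  field_simp
  ring

lemma setLIntegral_mul_setLIntegral_swap {α : Type*} [MeasurableSpace α] {μ : Measure α}
    [SFinite μ] {k : ℝ → ℝ≥0∞} (hk : Measurable k) {v : α → ℝ≥0∞} (hv : Measurable v)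
    {S : Set (ℝ × α)} (hS : MeasurableSet S) :
    ∫⁻ t in Ioi (0 : ℝ), k t * ∫⁻ x in {x | (t, x) ∈ S}, v x ∂μ
      = ∫⁻ x, (∫⁻ t in Ioi 0 ∩ {t | (t, x) ∈ S}, k t) * v x ∂μ := by
  have m1 (t : ℝ) : MeasurableSet {x | (t, x) ∈ S} := measurable_prodMk_left hS
  have m2 (x : α) : MeasurableSet {t | (t, x) ∈ S} := measurable_prodMk_right hS
  have hm : Measurable (fun z : ℝ × α => S.indicator (fun z => k z.1 * v z.2) z) :=
    Measurable.indicator (by fun_prop) hS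
  calc _ = ∫⁻ t in Ioi (0 : ℝ), ∫⁻ x, S.indicator (fun z => k z.1 * v z.2) (t, x) ∂μ := by
        congr 1 with t
        rw [← lintegral_const_mul _ hv, ← lintegral_indicator (m1 t)]
        rfl
    _ = ∫⁻ x, (∫⁻ t in Ioi (0 : ℝ), S.indicator (fun z => k z.1 * v z.2) (t, x)) ∂μ :=
        lintegral_lintegral_swap hm.aemeasurable
    _ = _ := by
        congr 1 with x
        rw [← lintegral_mul_const _ hk, inter_comm, ← Measure.restrict_restrict (m2 x),
          ← lintegral_indicator (m2 x)]
        rfl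

lemma measurable_setLIntegral_section {α β : Type*} [MeasurableSpace α] [MeasurableSpace β]
    {μ : Measure α} [SFinite μ] {v : α → ℝ≥0∞} (hv : Measurable v) {S : Set (β × α)}
    (hS : MeasurableSet S) : Measurable fun t : β => ∫⁻ x in {x | (t, x) ∈ S}, v x ∂μ := by
  have h := (Measurable.indicator (f := fun z : β × α => v z.2)
    (by fun_prop) hS).lintegral_prod_right' (ν := μ)
  convert h using 2 with t
  have hm : MeasurableSet {x | (t, x) ∈ S} := measurable_prodMk_left hS
  rw [← lintegral_indicator hm]
  rfl

/-- The measure `(1 + |ξ|²)^{-d} dξ` of the Hardy–Littlewood–Paley inequality. -/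
def paleyMeasure (d : ℕ) : Measure (E d) :=
  volume.withDensity fun ξ => ENNReal.ofReal (((1 + ‖ξ‖ ^ 2) ^ d)⁻¹)

/-- The operator `F ↦ (1 + |ξ|²)^{d/2} |ℱF(ξ)|`. -/
def paleyOp (d : ℕ) (F : E d → ℂ) (ξ : E d) : ℝ :=
  ‖FT d F ξ‖ * (1 + ‖ξ‖ ^ 2) ^ ((d : ℝ) / 2)

lemma norm_exp_neg_I_mul_ofReal (t : ℝ) : ‖Complex.exp (-Complex.I * t)‖ = 1 := by
  simpa using norm_exp_I_mul_ofReal (-t)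

lemma norm_FT_le (d : ℕ) (F : E d → ℂ) (ξ : E d) : ‖FT d F ξ‖ ≤ ∫ x, ‖F x‖ := by
  refine (norm_integral_le_integral_norm _).trans_eq ?_
  simp only [norm_mul, norm_exp_neg_I_mul_ofReal, one_mul]

lemma continuous_FT (d : ℕ) {F : E d → ℂ} (hF : Integrable F) : Continuous (FT d F) := by
  have h : Continuous (𝓕 F) := VectorFourier.fourierIntegral_continuous continuous_fourierChar
    continuous_inner hF
  have : FT d F = fun ξ => 𝓕 F ((2 * π)⁻¹ • ξ) := funext (FT_eq_fourier d F)
  rw [this]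
  fun_prop

lemma FT_add (d : ℕ) {F G : E d → ℂ} (hF : Integrable F) (hG : Integrable G) (ξ : E d) :
    FT d (fun x => F x + G x) ξ = FT d F ξ + FT d G ξ := by
  have hm : AEStronglyMeasurable (fun x : E d => Complex.exp (-Complex.I * (⟪x, ξ⟫ : ℂ))) :=
    Continuous.aestronglyMeasurable (by fun_prop)
  have hb : ∀ᵐ x : E d, ‖Complex.exp (-Complex.I * (⟪x, ξ⟫ : ℂ))‖ ≤ 1 :=
    Eventually.of_forall fun x => (norm_exp_neg_I_mul_ofReal _).le
  simp only [FT, mul_add]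
  exact integral_add (hF.bdd_mul hm hb) (hG.bdd_mul hm hb)

lemma measurable_paleyOp (d : ℕ) {F : E d → ℂ} (hF : Integrable F) : Measurable (paleyOp d F) := by
  have := (continuous_FT d hF).measurable
  unfold paleyOp
  fun_prop

lemma paleyOp_nonneg (d : ℕ) (F : E d → ℂ) (ξ : E d) : 0 ≤ paleyOp d F ξ := by
  unfold paleyOp; positivity

lemma paleyMeasure_lt_paleyOp_le_of_integrable (d : ℕ) (hd : 1 ≤ d) : ∃ C : ℝ≥0∞, C ≠ ⊤ ∧
    ∀ F : E d → ℂ, Integrable F → ∀ t : ℝ, 0 < t →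
      paleyMeasure d {ξ | t < paleyOp d F ξ} ≤ C * (ENNReal.ofReal t⁻¹ * ∫⁻ x, ‖F x‖ₑ) := by
  obtain ⟨C, hC, h⟩ := lintegral_japanese_tail_le d hd
  refine ⟨C, hC, fun F hF t ht => ?_⟩
  set A := ∫ x, ‖F x‖ with hA
  have hA0 : 0 ≤ A := integral_nonneg fun _ => norm_nonneg _
  have hAe : ∫⁻ x, ‖F x‖ₑ = ENNReal.ofReal A := (ofReal_integral_norm_eq_lintegral_enorm hF).symm
  rcases hA0.eq_or_lt with h0 | hA0
  · have : {ξ | t < paleyOp d F ξ} = ∅ := by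
      ext ξ
      simp only [mem_ofPred_eq, mem_empty_iff_false, iff_false, not_lt]
      have := norm_FT_le d F ξ
      rw [← hA, ← h0] at this
      rw [paleyOp, le_antisymm this (norm_nonneg _), zero_mul]
      exact ht.le
    simp [this]
  have hsub : {ξ | t < paleyOp d F ξ} ⊆ {ξ : E d | t / A < (1 + ‖ξ‖ ^ 2) ^ ((d : ℝ) / 2)} := by
    intro ξ hξ
    rw [mem_ofPred_eq, div_lt_iff₀ hA0, mul_comm]
    refine lt_of_lt_of_le hξ ?_
    exact mul_le_mul_of_nonneg_right (norm_FT_le d F ξ) (by positivity)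
  have hm : MeasurableSet {ξ : E d | t / A < (1 + ‖ξ‖ ^ 2) ^ ((d : ℝ) / 2)} :=
    measurableSet_lt measurable_const (by fun_prop)
  refine (measure_mono hsub).trans ?_
  rw [paleyMeasure, withDensity_apply _ hm]
  refine (h (t / A) (by positivity)).trans_eq ?_
  rw [hAe, ← ENNReal.ofReal_mul (by positivity)]
  congr 2
  field_simp

lemma lintegral_paleyMeasure (d : ℕ) {f : E d → ℝ≥0∞} (hf : Measurable f) :
    ∫⁻ ξ, f ξ ∂paleyMeasure d = ∫⁻ ξ, ENNReal.ofReal (((1 + ‖ξ‖ ^ 2) ^ d)⁻¹) * f ξ := by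
  rw [paleyMeasure, lintegral_withDensity_eq_lintegral_mul _ (by fun_prop) hf]
  rfl

lemma paleyMeasure_lt_paleyOp_le_of_memLp_two (d : ℕ) {F : E d → ℂ} (h1 : Integrable F)
    (h2 : MemLp F 2) {t : ℝ} (ht : 0 < t) :
    paleyMeasure d {ξ | t < paleyOp d F ξ} ≤
      ENNReal.ofReal ((2 * π) ^ d) * (ENNReal.ofReal (t⁻¹ ^ 2) * ∫⁻ x, ‖F x‖ₑ ^ (2 : ℝ)) := by
  have hm := measurable_paleyOp d h1
  calc _ ≤ paleyMeasure d {ξ | ENNReal.ofReal (t ^ 2) ≤ ENNReal.ofReal (paleyOp d F ξ ^ 2)} :=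
        measure_mono fun ξ hξ => ENNReal.ofReal_le_ofReal
          (pow_le_pow_left₀ ht.le (le_of_lt hξ) 2)
    _ ≤ (∫⁻ ξ, ENNReal.ofReal (paleyOp d F ξ ^ 2) ∂paleyMeasure d) / ENNReal.ofReal (t ^ 2) :=
        meas_ge_le_lintegral_div (by fun_prop) (by simpa using ht.ne') (by simp)
    _ = (∫⁻ ξ, ‖FT d F ξ‖ₑ ^ (2 : ℝ)) / ENNReal.ofReal (t ^ 2) := by
        congr 1
        rw [lintegral_paleyMeasure d (by fun_prop)]
        congr 1 with ξ
        rw [← ENNReal.ofReal_mul (by positivity), ← ofReal_norm,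
          ENNReal.ofReal_rpow_of_nonneg (by positivity) (by norm_num)]
        congr 1
        rw [paleyOp, mul_pow, ← Real.rpow_natCast ((1 + ‖ξ‖ ^ 2) ^ ((d : ℝ) / 2)) 2,
          ← Real.rpow_mul (by positivity), Real.rpow_two]
        push_cast
        rw [div_mul_cancel₀ _ two_ne_zero, Real.rpow_natCast]
        field_simp
    _ = _ := by
        rw [plancherel_FT d h1 h2, div_eq_mul_inv, ← ENNReal.ofReal_inv_of_pos (by positivity),
          mul_assoc, inv_pow, mul_comm (ENNReal.ofReal (t ^ 2)⁻¹)]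

/-- The Hardy–Littlewood–Paley inequality `∫ (1+|ξ|²)^{-d(2-p)/2} |ℱF|^p ≤ C ∫ |F|^p`. -/
lemma paley_inequality (d : ℕ) (hd : 1 ≤ d) {p : ℝ} (hp1 : 1 < p) (hp2 : p < 2) :
    ∃ C : ℝ≥0∞, C ≠ ⊤ ∧ ∀ F : E d → ℂ, Measurable F → Integrable F → MemLp F 2 →
      ∫⁻ ξ, ENNReal.ofReal (paleyOp d F ξ ^ p) ∂paleyMeasure d ≤ C * ∫⁻ x, ‖F x‖ₑ ^ p := by
  obtain ⟨C₁, hC₁, weak⟩ := paleyMeasure_lt_paleyOp_le_of_integrable d hd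
  set C₂ := ENNReal.ofReal ((2 * π) ^ d)
  refine ⟨ENNReal.ofReal p * (C₁ * ENNReal.ofReal 2 * ENNReal.ofReal (p - 1)⁻¹ +
      C₂ * ENNReal.ofReal 4 * ENNReal.ofReal (2 - p)⁻¹), by finiteness, fun F hF h1 h2 => ?_⟩
  have hmS (t : ℝ) : MeasurableSet {x | t < ‖F x‖} :=
    measurableSet_lt measurable_const (by fun_prop)
  have key (t : ℝ) (ht : 0 < t) : paleyMeasure d {ξ | t < paleyOp d F ξ} ≤
      C₁ * (ENNReal.ofReal (2 * t⁻¹) * ∫⁻ x in {x | t < ‖F x‖}, ‖F x‖ₑ) +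
      C₂ * (ENNReal.ofReal (4 * t⁻¹ ^ 2) * ∫⁻ x in {x | ‖F x‖ ≤ t}, ‖F x‖ₑ ^ (2 : ℝ)) := by
    set S := {x | t < ‖F x‖} with hS
    have hSc : {x | ‖F x‖ ≤ t} = Sᶜ := by ext; simp [hS]
    have i1 : Integrable (S.indicator F) := h1.indicator (hmS t)
    have i2 : Integrable (Sᶜ.indicator F) := h1.indicator (hmS t).compl
    have hsum : F = fun x => S.indicator F x + Sᶜ.indicator F x :=
      funext fun x => (indicator_self_add_compl_apply S F x).symm
    have hsub : {ξ | t < paleyOp d F ξ} ⊆ {ξ | t / 2 < paleyOp d (S.indicator F) ξ} ∪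
        {ξ | t / 2 < paleyOp d (Sᶜ.indicator F) ξ} := by
      intro ξ hξ
      by_contra hcon
      simp only [mem_union, mem_ofPred_eq, not_or, not_lt] at hcon hξ
      have : paleyOp d F ξ ≤ paleyOp d (S.indicator F) ξ + paleyOp d (Sᶜ.indicator F) ξ := by
        simp only [paleyOp, ← add_mul]
        refine mul_le_mul_of_nonneg_right ?_ (by positivity)
        conv_lhs => rw [hsum]
        rw [FT_add d i1 i2]
        exact norm_add_le _ _
      linarith [hcon.1, hcon.2]
    refine (measure_mono hsub).trans ((measure_union_le _ _).trans (add_le_add ?_ ?_))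
    · refine (weak _ i1 (t / 2) (by positivity)).trans_eq ?_
      rw [inv_div, div_eq_mul_inv, ← lintegral_indicator (hmS t)]
      simp only [enorm_indicator_eq_indicator_enorm, hS]
    · refine (paleyMeasure_lt_paleyOp_le_of_memLp_two d i2 (h2.indicator (hmS t).compl)
        (t := t / 2) (by positivity)).trans_eq ?_
      rw [hSc, ← lintegral_indicator (hmS t).compl]
      congr 2
      · congr 1
        field_simp
        norm_num
      · congr 1 with x
        by_cases hx : x ∈ Sᶜ
        · rw [indicator_of_mem hx, indicator_of_mem hx]
        · rw [indicator_of_notMem hx, indicator_of_notMem hx]; simp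
  rw [lintegral_rpow_eq_lintegral_meas_lt_mul _
    (Eventually.of_forall fun ξ => paleyOp_nonneg d F ξ)
    (measurable_paleyOp d h1).aemeasurable (by linarith), mul_assoc]
  gcongr
  have m1 : MeasurableSet {z : ℝ × E d | z.1 < ‖F z.2‖} :=
    measurableSet_lt (by fun_prop) (by fun_prop)
  have m2 : MeasurableSet {z : ℝ × E d | ‖F z.2‖ ≤ z.1} :=
    measurableSet_le (by fun_prop) (by fun_prop)
  have s1 := setLIntegral_mul_setLIntegral_swap (μ := (volume : Measure (E d)))
    (k := fun t => ENNReal.ofReal (t ^ (p - 2))) (by fun_prop)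
    (v := fun x => ‖F x‖ₑ) (by fun_prop) m1
  have s2 := setLIntegral_mul_setLIntegral_swap (μ := (volume : Measure (E d)))
    (k := fun t => ENNReal.ofReal (t ^ (p - 3))) (by fun_prop)
    (v := fun x => ‖F x‖ₑ ^ (2 : ℝ)) (by fun_prop) m2
  have r1 : ∀ x, (∫⁻ t in Ioi 0 ∩ {t | (t, x) ∈ {z : ℝ × E d | z.1 < ‖F z.2‖}},
      ENNReal.ofReal (t ^ (p - 2))) * ‖F x‖ₑ = ENNReal.ofReal (p - 1)⁻¹ * ‖F x‖ₑ ^ p := fun x => by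
    rw [← ofReal_norm, ENNReal.ofReal_rpow_of_nonneg (norm_nonneg _) (by linarith),
      ← lintegral_Ioo_rpow_mul (norm_nonneg _) hp1]
    rfl
  have r2 : ∀ x, (∫⁻ t in Ioi 0 ∩ {t | (t, x) ∈ {z : ℝ × E d | ‖F z.2‖ ≤ z.1}},
      ENNReal.ofReal (t ^ (p - 3))) * ‖F x‖ₑ ^ (2 : ℝ)
        = ENNReal.ofReal (2 - p)⁻¹ * ‖F x‖ₑ ^ p := fun x => by
    rw [← ofReal_norm, ENNReal.ofReal_rpow_of_nonneg (norm_nonneg _) (by linarith),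
      ENNReal.ofReal_rpow_of_nonneg (norm_nonneg _) (by linarith), Real.rpow_two,
      ← lintegral_Ici_rpow_mul (norm_nonneg _) (by linarith) hp2]
    rfl
  simp only [r1, r2] at s1 s2
  rw [lintegral_const_mul _ (by fun_prop)] at s1 s2
  simp only [mem_ofPred_eq] at s1 s2
  have n1 : Measurable fun t : ℝ => ∫⁻ x in {x | t < ‖F x‖}, ‖F x‖ₑ :=
    measurable_setLIntegral_section (by fun_prop) m1
  have n2 : Measurable fun t : ℝ => ∫⁻ x in {x | ‖F x‖ ≤ t}, ‖F x‖ₑ ^ (2 : ℝ) :=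
    measurable_setLIntegral_section (by fun_prop) m2
  calc _ ≤ ∫⁻ t in Ioi (0 : ℝ),
        (C₁ * ENNReal.ofReal 2 *
          (ENNReal.ofReal (t ^ (p - 2)) * ∫⁻ x in {x | t < ‖F x‖}, ‖F x‖ₑ) +
        C₂ * ENNReal.ofReal 4 *
          (ENNReal.ofReal (t ^ (p - 3)) * ∫⁻ x in {x | ‖F x‖ ≤ t}, ‖F x‖ₑ ^ (2 : ℝ))) := by
        refine setLIntegral_mono' measurableSet_Ioi fun t (ht : 0 < t) => ?_
        refine (mul_le_mul_left (key t ht) _).trans_eq ?_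
        have e1 : ENNReal.ofReal (2 * t⁻¹) * ENNReal.ofReal (t ^ (p - 1))
            = ENNReal.ofReal 2 * ENNReal.ofReal (t ^ (p - 2)) := by
          rw [← ENNReal.ofReal_mul (by positivity), ← ENNReal.ofReal_mul (by positivity),
            show p - 1 = 1 + (p - 2) by ring, Real.rpow_add ht, Real.rpow_one]
          congr 1
          field_simp
        have e2 : ENNReal.ofReal (4 * t⁻¹ ^ 2) * ENNReal.ofReal (t ^ (p - 1))
            = ENNReal.ofReal 4 * ENNReal.ofReal (t ^ (p - 3)) := by
          rw [← ENNReal.ofReal_mul (by positivity), ← ENNReal.ofReal_mul (by positivity),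
            show p - 1 = 2 + (p - 3) by ring, Real.rpow_add ht, Real.rpow_two]
          congr 1
          field_simp
        rw [add_mul]
        congr 1
        · rw [mul_assoc, mul_right_comm, e1]; ring
        · rw [mul_assoc, mul_right_comm, e2]; ring
    _ = _ := by
        rw [lintegral_add_left (by fun_prop), lintegral_const_mul _ (by fun_prop), s1,
          lintegral_const_mul' _ _ (by finiteness), s2]
        ring

lemma integral_gaussian_mul_cexp_inner (d : ℕ) {b : ℝ} (hb : 0 < b) (w : E d) :
    ∫ y : E d, (rexp (-b * ‖y‖ ^ 2) : ℂ) * Complex.exp (Complex.I * (⟪y, w⟫ : ℂ)) =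
      (((π / b) ^ ((d : ℝ) / 2) : ℝ) : ℂ) * (rexp (-‖w‖ ^ 2 / (4 * b)) : ℂ) := by
  have h := GaussianFourier.integral_cexp_neg_mul_sq_norm_add (V := E d) (b := (b : ℂ))
    (by simpa using hb) Complex.I w
  rw [finrank_euclideanSpace_fin] at h
  convert h using 1
  · congr 1 with y
    rw [Complex.ofReal_exp, ← Complex.exp_add, real_inner_comm]
    push_cast
    rfl
  · rw [Complex.ofReal_cpow (by positivity)]
    push_cast
    rw [Complex.I_sq, neg_one_mul]

lemma integrable_gaussian_sub (d : ℕ) {b : ℝ} (hb : 0 < b) (x : E d) :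
    Integrable fun y : E d => rexp (-b * ‖y - x‖ ^ 2) := by
  have h := (GaussianFourier.integrable_cexp_neg_mul_sq_norm_add (V := E d) (b := (b : ℂ))
    (by simpa using hb) 0 0).norm
  have h2 : Integrable fun y : E d => rexp (-b * ‖y‖ ^ 2) := by
    refine h.congr (Eventually.of_forall fun y => ?_)
    simp only [zero_mul, add_zero]
    rw [← Complex.ofReal_pow, ← Complex.ofReal_neg, ← Complex.ofReal_mul, Complex.norm_exp_ofReal]
  exact h2.comp_sub_right x

/-- The short-time Fourier transform (up to a phase) with Gaussian window, on the Fourier side. -/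
def fourierStft (d : ℕ) (a : ℝ) (U : E d → ℂ) (x ξ : E d) : ℂ :=
  ∫ η, U η * Complex.exp (Complex.I * (⟪x, η⟫ : ℂ)) * (rexp (-a * ‖η - ξ‖ ^ 2) : ℂ)

lemma norm_FT_mul_gaussian (d : ℕ) {b : ℝ} (hb : 0 < b) {u U : E d → ℂ} (hU : Integrable U)
    (hu : ∀ y, u y = (((2 * π) ^ d : ℝ) : ℂ)⁻¹ *
      ∫ η, Complex.exp (Complex.I * (⟪y, η⟫ : ℂ)) * U η) (x ξ : E d) :
    ‖FT d (fun y => u y * (rexp (-b * ‖y - x‖ ^ 2) : ℂ)) ξ‖ =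
      ((2 * π) ^ d)⁻¹ * (π / b) ^ ((d : ℝ) / 2) * ‖fourierStft d (1 / (4 * b)) U x ξ‖ := by
  have hg := integrable_gaussian_sub d hb x
  have hint : Integrable (fun z : E d × E d =>
      (Complex.exp (-Complex.I * (⟪z.1, ξ⟫ : ℂ)) * Complex.exp (Complex.I * (⟪z.1, z.2⟫ : ℂ))) *
        ((rexp (-b * ‖z.1 - x‖ ^ 2) : ℂ) * U z.2)) (volume.prod volume) := by
    refine (hg.ofReal.mul_prod hU).bdd_mul (c := 1)
      (Continuous.aestronglyMeasurable (by fun_prop)) (Eventually.of_forall fun z => ?_)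
    rw [norm_mul, norm_exp_neg_I_mul_ofReal, norm_exp_I_mul_ofReal, mul_one]
  have inner (η : E d) : ∫ y : E d, (Complex.exp (-Complex.I * (⟪y, ξ⟫ : ℂ)) *
      Complex.exp (Complex.I * (⟪y, η⟫ : ℂ))) * ((rexp (-b * ‖y - x‖ ^ 2) : ℂ) * U η) =
      (((π / b) ^ ((d : ℝ) / 2) : ℝ) : ℂ) * Complex.exp (-Complex.I * (⟪x, ξ⟫ : ℂ)) *
      (U η * Complex.exp (Complex.I * (⟪x, η⟫ : ℂ)) *
        (rexp (-(1 / (4 * b)) * ‖η - ξ‖ ^ 2) : ℂ)) := by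
    have h0 := integral_gaussian_mul_cexp_inner d hb (η - ξ)
    rw [← integral_add_right_eq_self _ x]
    calc _ = ∫ y : E d, (U η * Complex.exp (-Complex.I * (⟪x, ξ⟫ : ℂ)) *
          Complex.exp (Complex.I * (⟪x, η⟫ : ℂ))) * ((rexp (-b * ‖y‖ ^ 2) : ℂ) *
            Complex.exp (Complex.I * (⟪y, η - ξ⟫ : ℂ))) := by
          congr 1 with y
          rw [add_sub_cancel_right, inner_add_left, inner_add_left, inner_sub_right]
          push_cast
          simp only [mul_add, mul_sub, Complex.exp_add, Complex.exp_sub, neg_mul, Complex.exp_neg]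
          ring
      _ = _ := by
          rw [integral_const_mul, h0]
          rw [show -(1 / (4 * b)) * ‖η - ξ‖ ^ 2 = -‖η - ξ‖ ^ 2 / (4 * b) by ring]
          ring
  have main : FT d (fun y => u y * (rexp (-b * ‖y - x‖ ^ 2) : ℂ)) ξ =
      (((2 * π) ^ d : ℝ) : ℂ)⁻¹ * ((((π / b) ^ ((d : ℝ) / 2) : ℝ) : ℂ) *
        Complex.exp (-Complex.I * (⟪x, ξ⟫ : ℂ)) * fourierStft d (1 / (4 * b)) U x ξ) := by
    calc _ = (((2 * π) ^ d : ℝ) : ℂ)⁻¹ * ∫ y, ∫ η,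
          (Complex.exp (-Complex.I * (⟪y, ξ⟫ : ℂ)) * Complex.exp (Complex.I * (⟪y, η⟫ : ℂ))) *
            ((rexp (-b * ‖y - x‖ ^ 2) : ℂ) * U η) := by
          rw [FT, ← integral_const_mul]
          congr 1 with y
          rw [hu, show ∀ A B C D : ℂ, A * (B * C * D) = B * (A * D * C) by intros; ring,
            ← integral_const_mul]
          congr 2 with η
          ring
      _ = _ := by
          rw [integral_integral_swap hint]
          simp only [inner]
          rw [integral_const_mul]
          rfl
  rw [main, norm_mul, norm_mul, norm_mul, norm_exp_neg_I_mul_ofReal, norm_inv, Complex.norm_real,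
    Complex.norm_real, Real.norm_of_nonneg (by positivity), Real.norm_of_nonneg (by positivity)]
  ring

lemma stft_eq_FT (d : ℕ) (f : E d → ℂ) (z : P d) :
    stft d f z = FT d (fun y => f y * (rexp (-(1 / 2) * ‖y - z.1‖ ^ 2) : ℂ)) z.2 := by
  unfold stft FT pkbar
  congr 1 with y
  beta_reduce
  rw [show -(1 / 2) * ‖y - z.1‖ ^ 2 = -‖y - z.1‖ ^ 2 / 2 by ring]
  ring

lemma measurable_fourierStft (d : ℕ) (a : ℝ) {U : E d → ℂ} (hU : Measurable U) :
    Measurable fun z : E d × E d => fourierStft d a U z.1 z.2 := by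
  have h : StronglyMeasurable fun q : (E d × E d) × E d =>
      U q.2 * Complex.exp (Complex.I * (⟪q.1.1, q.2⟫ : ℂ)) *
        (rexp (-a * ‖q.2 - q.1.2‖ ^ 2) : ℂ) := by
    apply Measurable.stronglyMeasurable
    fun_prop
  exact (h.integral_prod_right' (ν := volume)).measurable

lemma lintegral_exp_kernel_le {s : ℝ} (hs : 0 < s) : ∃ C : ℝ≥0∞, C ≠ ⊤ ∧ ∀ r : ℝ, 0 ≤ r →
    ∫⁻ t in Ioi (0 : ℝ), ENNReal.ofReal (t ^ (s - 1) * rexp (-t - r * t / (4 * t + 1))) ≤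
      C * ENNReal.ofReal ((1 + r) ^ (-s)) := by
  have hΓ := Real.Gamma_pos_of_pos hs
  have hlint {c : ℝ} (hc : 0 < c) :
      ∫⁻ t in Ioi (0 : ℝ), ENNReal.ofReal (t ^ (s - 1) * rexp (-(c * t)))
      = ENNReal.ofReal ((1 / c) ^ s * Real.Gamma s) := by
    have hI := Real.integral_rpow_mul_exp_neg_mul_Ioi hs hc
    rw [← hI, ofReal_integral_eq_lintegral_ofReal]
    · by_contra hcon
      rw [integral_undef hcon] at hI
      have : 0 < (1 / c) ^ s * Real.Gamma s := by positivity
      linarith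
    · filter_upwards [ae_restrict_mem measurableSet_Ioi] with t ht
      have : (0 : ℝ) < t := ht
      positivity
  refine ⟨ENNReal.ofReal (5 ^ s * Real.Gamma s) +
    ENNReal.ofReal ((5 * s) ^ s * (5 ^ s * Real.Gamma s)), by finiteness, fun r hr => ?_⟩
  have hr1 : 0 < 1 + r := by linarith
  have hexp : rexp (-((1 + r) / 5)) ≤ (5 * s) ^ s * (1 + r) ^ (-s) := by
    have h1 : (1 + r) / (5 * s) ≤ rexp ((1 + r) / (5 * s)) := by
      linarith [Real.add_one_le_exp ((1 + r) / (5 * s))]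
    have h2 := Real.rpow_le_rpow (by positivity) h1 hs.le
    rw [← Real.exp_mul, Real.div_rpow hr1.le (by positivity), div_le_iff₀ (by positivity),
      show (1 + r) / (5 * s) * s = (1 + r) / 5 by field_simp] at h2
    rw [Real.rpow_neg hr1.le, Real.exp_neg, ← div_eq_mul_inv, le_div_iff₀ (by positivity),
      inv_mul_le_iff₀ (by positivity)]
    exact h2
  calc _ ≤ ∫⁻ t in Ioi (0 : ℝ), (ENNReal.ofReal (t ^ (s - 1) * rexp (-((1 + r) / 5 * t))) +
        ENNReal.ofReal ((5 * s) ^ s * (1 + r) ^ (-s)) *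
          ENNReal.ofReal (t ^ (s - 1) * rexp (-(1 / 5 * t)))) := by
        refine setLIntegral_mono' measurableSet_Ioi fun t (ht : 0 < t) => ?_
        rw [← ENNReal.ofReal_mul (by positivity), ← ENNReal.ofReal_add (by positivity)
          (by positivity)]
        apply ENNReal.ofReal_le_ofReal
        have hp := Real.rpow_nonneg ht.le (s - 1)
        rcases le_total t 1 with h1 | h1
        · have : t / 5 ≤ t / (4 * t + 1) :=
            div_le_div_of_nonneg_left ht.le (by positivity) (by linarith)
          have h2 : -t - r * t / (4 * t + 1) ≤ -((1 + r) / 5 * t) := by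
            rw [mul_div_assoc]
            nlinarith [mul_le_mul_of_nonneg_left this hr]
          have h3 : t ^ (s - 1) * rexp (-t - r * t / (4 * t + 1)) ≤
            t ^ (s - 1) * rexp (-((1 + r) / 5 * t)) := by gcongr
          have h4 : 0 ≤ (5 * s) ^ s * (1 + r) ^ (-s) * (t ^ (s - 1) * rexp (-(1 / 5 * t))) := by
            positivity
          linarith
        · have : 1 / 5 ≤ t / (4 * t + 1) := by
            rw [div_le_div_iff₀ (by norm_num) (by positivity)]; linarith
          have h2 : -t - r * t / (4 * t + 1) ≤ -((1 + r) / 5) + -(1 / 5 * t) := by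
            rw [mul_div_assoc]
            nlinarith [mul_le_mul_of_nonneg_left this hr]
          have h3 : t ^ (s - 1) * rexp (-t - r * t / (4 * t + 1)) ≤
              t ^ (s - 1) * (((5 * s) ^ s * (1 + r) ^ (-s)) * rexp (-(1 / 5 * t))) := by
            refine mul_le_mul_of_nonneg_left ?_ hp
            refine (Real.exp_le_exp.2 h2).trans ?_
            rw [Real.exp_add]
            gcongr
          have h4 : 0 ≤ t ^ (s - 1) * rexp (-((1 + r) / 5 * t)) := by positivity
          linarith
    _ = _ := by
        rw [lintegral_add_left (by fun_prop), lintegral_const_mul _ (by fun_prop),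
          hlint (by positivity), hlint (by positivity), add_mul,
          ← ENNReal.ofReal_mul (by positivity), ← ENNReal.ofReal_mul (by positivity),
          ← ENNReal.ofReal_mul (by positivity)]
        congr 2
        · rw [one_div_div, Real.div_rpow (by norm_num) hr1.le, Real.rpow_neg hr1.le]
          ring
        · rw [one_div_one_div]; ring

/-- The measure `dt dw` on `(0, ∞) × ℝ^d`. -/
def halfSpaceMeasure (d : ℕ) : Measure (ℝ × E d) :=
  (volume.restrict (Ioi (0 : ℝ))).prod volume

instance (d : ℕ) : SFinite (halfSpaceMeasure d) := by
  unfold halfSpaceMeasure; infer_instance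

/-- The modulus of the kernel representing `(1 + |η|²)^{-s} exp(-|η - ξ|²/4)` as a superposition
of characters `exp(-i w·η)`. -/
def superDensity (d : ℕ) (s : ℝ) (ξ : E d) (q : ℝ × E d) : ℝ :=
  (Real.Gamma s)⁻¹ * (q.1 ^ (s - 1) * rexp (-q.1 - ‖ξ‖ ^ 2 * q.1 / (4 * q.1 + 1))) *
    ((π * (4 * q.1 + 1)) ^ (-(d : ℝ) / 2) * rexp (-(1 / (4 * q.1 + 1)) * ‖q.2‖ ^ 2))

lemma measurable_superDensity (d : ℕ) (s : ℝ) :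
    Measurable fun z : E d × (ℝ × E d) => superDensity d s z.1 z.2 := by
  unfold superDensity
  fun_prop

lemma superDensity_nonneg (d : ℕ) {s : ℝ} (hs : 0 < s) (ξ : E d) {q : ℝ × E d} (hq : 0 < q.1) :
    0 ≤ superDensity d s ξ q := by
  have := Real.Gamma_pos_of_pos hs
  unfold superDensity
  positivity

lemma ae_halfSpaceMeasure_pos (d : ℕ) : ∀ᵐ q ∂halfSpaceMeasure d, 0 < q.1 := by
  have h : ∀ᵐ t ∂(volume.restrict (Ioi (0 : ℝ))), 0 < t := ae_restrict_mem measurableSet_Ioi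
  exact Measure.quasiMeasurePreserving_fst.ae h

lemma lintegral_superDensity_le (d : ℕ) {s : ℝ} (hs : 0 < s) :
    ∃ C : ℝ≥0∞, C ≠ ⊤ ∧ ∀ ξ : E d,
      ∫⁻ q, ENNReal.ofReal (superDensity d s ξ q) ∂halfSpaceMeasure d ≤
        C * ENNReal.ofReal ((1 + ‖ξ‖ ^ 2) ^ (-s)) := by
  obtain ⟨C, hC, h⟩ := lintegral_exp_kernel_le hs
  have hΓ := Real.Gamma_pos_of_pos hs
  refine ⟨ENNReal.ofReal (Real.Gamma s)⁻¹ * C, by finiteness, fun ξ => ?_⟩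
  have hm : Measurable (superDensity d s ξ) :=
    (measurable_superDensity d s).comp (measurable_const.prodMk measurable_id)
  rw [halfSpaceMeasure, lintegral_prod _ (by fun_prop), mul_assoc]
  refine le_trans (le_of_eq ?_) (mul_le_mul_right (h (‖ξ‖ ^ 2) (by positivity)) _)
  rw [← lintegral_const_mul _ (by fun_prop)]
  refine setLIntegral_congr_fun measurableSet_Ioi fun t (ht : 0 < t) => ?_
  have hb : 0 < 1 / (4 * t + 1) := by positivity
  have h1 : ∫⁻ w : E d, ENNReal.ofReal (rexp (-(1 / (4 * t + 1)) * ‖w‖ ^ 2)) =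
      ENNReal.ofReal ((π * (4 * t + 1)) ^ ((d : ℝ) / 2)) := by
    have hi := integrable_gaussian_sub d hb 0
    simp only [sub_zero] at hi
    rw [← ofReal_integral_eq_lintegral_ofReal hi (Eventually.of_forall fun _ => by positivity)]
    have h2 := integral_gaussian_mul_cexp_inner d hb 0
    simp only [inner_zero_right, ofReal_zero, mul_zero, Complex.exp_zero, mul_one, norm_zero] at h2
    rw [integral_complex_ofReal, ← Complex.ofReal_mul, Complex.ofReal_inj] at h2
    rw [h2]
    simp
  simp only [superDensity]
  have e (w : E d) : ENNReal.ofReal ((Real.Gamma s)⁻¹ * (t ^ (s - 1) *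
      rexp (-t - ‖ξ‖ ^ 2 * t / (4 * t + 1))) * ((π * (4 * t + 1)) ^ (-(d : ℝ) / 2) *
        rexp (-(1 / (4 * t + 1)) * ‖w‖ ^ 2))) =
      ENNReal.ofReal ((Real.Gamma s)⁻¹ * (t ^ (s - 1) *
      rexp (-t - ‖ξ‖ ^ 2 * t / (4 * t + 1))) * (π * (4 * t + 1)) ^ (-(d : ℝ) / 2)) *
        ENNReal.ofReal (rexp (-(1 / (4 * t + 1)) * ‖w‖ ^ 2)) := by
    rw [← ENNReal.ofReal_mul (by positivity), ← mul_assoc]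
  simp only [e]
  rw [lintegral_const_mul _ (by fun_prop), h1, ← ENNReal.ofReal_mul (by positivity),
    ← ENNReal.ofReal_mul (by positivity), mul_assoc, ← Real.rpow_add (by positivity)]
  simp [neg_div]

lemma integrable_superDensity (d : ℕ) {s : ℝ} (hs : 0 < s) (ξ : E d) :
    Integrable (superDensity d s ξ) (halfSpaceMeasure d) := by
  obtain ⟨C, hC, h⟩ := lintegral_superDensity_le d hs
  have hm : Measurable (superDensity d s ξ) :=
    (measurable_superDensity d s).comp (measurable_const.prodMk measurable_id)
  refine ⟨hm.aestronglyMeasurable, ?_⟩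
  rw [hasFiniteIntegral_iff_ofReal
    ((ae_halfSpaceMeasure_pos d).mono fun q hq => superDensity_nonneg d hs ξ hq)]
  exact (h ξ).trans_lt (by finiteness)

lemma integral_superDensity (d : ℕ) {s : ℝ} (hs : 0 < s) (ξ η : E d) :
    ∫ q, (superDensity d s ξ q : ℂ) * Complex.exp (Complex.I *
        ((1 / (4 * q.1 + 1) * ⟪q.2, ξ⟫ - ⟪q.2, η⟫ : ℝ) : ℂ)) ∂halfSpaceMeasure d =
      (((1 + ‖η‖ ^ 2) ^ (-s) * rexp (-(1 / 4) * ‖η - ξ‖ ^ 2) : ℝ) : ℂ) := by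
  have hΓ := Real.Gamma_pos_of_pos hs
  have hint : Integrable (fun q : ℝ × E d => (superDensity d s ξ q : ℂ) * Complex.exp (Complex.I *
        ((1 / (4 * q.1 + 1) * ⟪q.2, ξ⟫ - ⟪q.2, η⟫ : ℝ) : ℂ))) (halfSpaceMeasure d) := by
    refine (integrable_superDensity d hs ξ).ofReal.mul_bdd (c := 1)
      (Measurable.aestronglyMeasurable (by fun_prop)) (Eventually.of_forall fun q => ?_)
    rw [norm_exp_I_mul_ofReal]
  rw [halfSpaceMeasure] at hint ⊢
  rw [integral_prod _ hint]
  have hin (t : ℝ) (ht : 0 < t) : ∫ w : E d, (superDensity d s ξ (t, w) : ℂ) *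
      Complex.exp (Complex.I * ((1 / (4 * t + 1) * ⟪w, ξ⟫ - ⟪w, η⟫ : ℝ) : ℂ)) =
      (((Real.Gamma s)⁻¹ * rexp (-(1 / 4) * ‖η - ξ‖ ^ 2) *
        (t ^ (s - 1) * rexp (-((1 + ‖η‖ ^ 2) * t))) : ℝ) : ℂ) := by
    have hb : 0 < 1 / (4 * t + 1) := by positivity
    have h0 := integral_gaussian_mul_cexp_inner d hb ((1 / (4 * t + 1)) • ξ - η)
    simp only [inner_sub_right, real_inner_smul_right] at h0
    simp only [superDensity]
    calc _ = (((Real.Gamma s)⁻¹ * (t ^ (s - 1) * rexp (-t - ‖ξ‖ ^ 2 * t / (4 * t + 1))) *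
          (π * (4 * t + 1)) ^ (-(d : ℝ) / 2) : ℝ) : ℂ) *
          ∫ w : E d, (rexp (-(1 / (4 * t + 1)) * ‖w‖ ^ 2) : ℂ) *
            Complex.exp (Complex.I * ((1 / (4 * t + 1) * ⟪w, ξ⟫ - ⟪w, η⟫ : ℝ) : ℂ)) := by
          rw [← integral_const_mul]
          congr 1 with w
          push_cast
          ring
      _ = _ := by
          rw [h0, ← Complex.ofReal_mul, ← Complex.ofReal_mul]
          congr 1
          have e1 : (π * (4 * t + 1)) ^ (-(d : ℝ) / 2) * (π / (1 / (4 * t + 1))) ^ ((d : ℝ) / 2)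
              = 1 := by
            rw [div_div_eq_mul_div, div_one, ← Real.rpow_add (by positivity)]
            simp [neg_div]
          have e2 : rexp (-t - ‖ξ‖ ^ 2 * t / (4 * t + 1)) *
              rexp (-‖(1 / (4 * t + 1)) • ξ - η‖ ^ 2 / (4 * (1 / (4 * t + 1)))) =
              rexp (-(1 / 4) * ‖η - ξ‖ ^ 2) * rexp (-((1 + ‖η‖ ^ 2) * t)) := by
            rw [← Real.exp_add, ← Real.exp_add, norm_sub_sq_real, norm_sub_sq_real, norm_smul,
              real_inner_smul_left, real_inner_comm, Real.norm_of_nonneg hb.le]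
            congr 1
            field_simp
            ring
          calc _ = (Real.Gamma s)⁻¹ * t ^ (s - 1) *
                ((π * (4 * t + 1)) ^ (-(d : ℝ) / 2) * (π / (1 / (4 * t + 1))) ^ ((d : ℝ) / 2)) *
                (rexp (-t - ‖ξ‖ ^ 2 * t / (4 * t + 1)) *
              rexp (-‖(1 / (4 * t + 1)) • ξ - η‖ ^ 2 / (4 * (1 / (4 * t + 1))))) := by ring
            _ = _ := by rw [e1, e2]; ring
  rw [setIntegral_congr_fun measurableSet_Ioi fun t ht => hin t ht, integral_complex_ofReal,
    integral_const_mul, Real.integral_rpow_mul_exp_neg_mul_Ioi hs (by positivity)]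
  congr 1
  rw [one_div (1 + ‖η‖ ^ 2), Real.inv_rpow (by positivity), Real.rpow_neg (by positivity)]
  field_simp

lemma enorm_fourierStft_le (d : ℕ) {s : ℝ} (hs : 0 < s) {U V : E d → ℂ} (hV : Integrable V)
    (hU : ∀ η, U η = (((1 + ‖η‖ ^ 2) ^ (-s) : ℝ) : ℂ) * V η) (x ξ : E d) :
    ‖fourierStft d (1 / 2) U x ξ‖ₑ ≤
      ∫⁻ q, ENNReal.ofReal (superDensity d s ξ q) * ‖fourierStft d (1 / 4) V (x - q.2) ξ‖ₑ
        ∂halfSpaceMeasure d := by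
  have hint : Integrable (fun z : E d × (ℝ × E d) =>
      (V z.1 * (superDensity d s ξ z.2 : ℂ)) *
      (Complex.exp (Complex.I * (⟪x, z.1⟫ : ℂ)) * (rexp (-(1 / 4) * ‖z.1 - ξ‖ ^ 2) : ℂ) *
        Complex.exp (Complex.I * ((1 / (4 * z.2.1 + 1) * ⟪z.2.2, ξ⟫ - ⟪z.2.2, z.1⟫ : ℝ) : ℂ))))
      (volume.prod (halfSpaceMeasure d)) := by
    refine (hV.mul_prod (integrable_superDensity d hs ξ).ofReal).mul_bdd (c := 1)
      (Measurable.aestronglyMeasurable (by fun_prop)) (Eventually.of_forall fun q => ?_)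
    rw [norm_mul, norm_mul, norm_exp_I_mul_ofReal, norm_exp_I_mul_ofReal, one_mul, mul_one,
      Complex.norm_real, Real.norm_of_nonneg (by positivity), Real.exp_le_one_iff]
    nlinarith [sq_nonneg ‖q.1 - ξ‖]
  have key : fourierStft d (1 / 2) U x ξ = ∫ q, (superDensity d s ξ q : ℂ) *
      (Complex.exp (Complex.I * ((1 / (4 * q.1 + 1) * ⟪q.2, ξ⟫ : ℝ) : ℂ)) *
        fourierStft d (1 / 4) V (x - q.2) ξ) ∂halfSpaceMeasure d := by
    calc _ = ∫ η, ∫ q, (V η * (superDensity d s ξ q : ℂ)) *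
          (Complex.exp (Complex.I * (⟪x, η⟫ : ℂ)) * (rexp (-(1 / 4) * ‖η - ξ‖ ^ 2) : ℂ) *
          Complex.exp (Complex.I * ((1 / (4 * q.1 + 1) * ⟪q.2, ξ⟫ - ⟪q.2, η⟫ : ℝ) : ℂ)))
            ∂halfSpaceMeasure d := by
          rw [fourierStft]
          congr 1 with η
          calc _ = (V η * Complex.exp (Complex.I * (⟪x, η⟫ : ℂ)) *
                (rexp (-(1 / 4) * ‖η - ξ‖ ^ 2) : ℂ)) *
                (((1 + ‖η‖ ^ 2) ^ (-s) * rexp (-(1 / 4) * ‖η - ξ‖ ^ 2) : ℝ) : ℂ) := by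
                rw [hU, show -(1 / 2) * ‖η - ξ‖ ^ 2 =
                  -(1 / 4) * ‖η - ξ‖ ^ 2 + -(1 / 4) * ‖η - ξ‖ ^ 2 by ring, Real.exp_add]
                push_cast
                ring
            _ = _ := by
                rw [← integral_superDensity d hs, ← integral_const_mul]
                congr 1 with q
                ring
      _ = _ := by
          rw [integral_integral_swap hint]
          congr 1 with q
          rw [fourierStft, ← integral_const_mul, ← integral_const_mul]
          congr 1 with η
          rw [inner_sub_left]
          push_cast
          simp only [mul_sub, Complex.exp_sub]
          field_simp
  rw [key]
  refine (enorm_integral_le_lintegral_enorm _).trans (lintegral_mono_ae ?_)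
  filter_upwards [ae_halfSpaceMeasure_pos d] with q hq
  rw [enorm_mul, enorm_mul]
  apply le_of_eq
  congr 1
  · rw [← ofReal_norm, Complex.norm_real, Real.norm_of_nonneg (superDensity_nonneg d hs ξ hq)]
  · rw [← ofReal_norm, norm_exp_I_mul_ofReal, ENNReal.ofReal_one, one_mul]

lemma lintegral_fourierStft_rpow_le (d : ℕ) {s : ℝ} (hs : 0 < s) {p : ℝ} (hp : 1 < p) :
    ∃ C : ℝ≥0∞, C ≠ ⊤ ∧ ∀ U V : E d → ℂ, Measurable V → Integrable V →
    (∀ η, U η = (((1 + ‖η‖ ^ 2) ^ (-s) : ℝ) : ℂ) * V η) → ∀ ξ : E d,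
    ∫⁻ x, ‖fourierStft d (1 / 2) U x ξ‖ₑ ^ p ≤
      C * ENNReal.ofReal ((1 + ‖ξ‖ ^ 2) ^ (-(s * p))) *
        ∫⁻ x, ‖fourierStft d (1 / 4) V x ξ‖ₑ ^ p := by
  obtain ⟨C, hC, hM⟩ := lintegral_superDensity_le d hs
  refine ⟨C ^ p, by finiteness, fun U V hVm hV hU ξ => ?_⟩
  set ρ : ℝ × E d → ℝ≥0∞ := fun q => ENNReal.ofReal (superDensity d s ξ q) with hρ
  set G : E d → ℝ≥0∞ := fun x => ‖fourierStft d (1 / 4) V x ξ‖ₑ with hG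
  have hp0 : 0 < p := by linarith
  have hρm : Measurable ρ := ENNReal.measurable_ofReal.comp
    ((measurable_superDensity d s).comp (measurable_const.prodMk measurable_id))
  have hGm : Measurable G :=
    ((measurable_fourierStft d (1 / 4) hVm).comp (measurable_id.prodMk measurable_const)).enorm
  have hGm2 : Measurable fun z : E d × (ℝ × E d) => G (z.1 - z.2.2) := hGm.comp (by fun_prop)
  set M : ℝ≥0∞ := ∫⁻ q, ρ q ∂halfSpaceMeasure d with hMdef
  have jensen (x : E d) : ‖fourierStft d (1 / 2) U x ξ‖ₑ ^ p ≤
      M ^ (p - 1) * ∫⁻ q, ρ q * G (x - q.2) ^ p ∂halfSpaceMeasure d := by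
    have hh := ENNReal.lintegral_mul_norm_pow_le (μ := halfSpaceMeasure d) (f := ρ)
      (g := fun q => ρ q * G (x - q.2) ^ p) hρm.aemeasurable
      (by fun_prop) (p := 1 - 1 / p) (q := 1 / p)
      (by rw [sub_nonneg, div_le_one hp0]; exact hp.le) (by positivity) (by ring)
    have e (q : ℝ × E d) : ρ q ^ (1 - 1 / p) * (ρ q * G (x - q.2) ^ p) ^ (1 / p) =
        ρ q * G (x - q.2) := by
      rw [ENNReal.mul_rpow_of_nonneg _ _ (by positivity), ← ENNReal.rpow_mul,
        mul_one_div_cancel hp0.ne', ENNReal.rpow_one, ← mul_assoc,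
        ← ENNReal.rpow_add_of_nonneg _ _ (by rw [sub_nonneg, div_le_one hp0]; exact hp.le)
          (by positivity), sub_add_cancel, ENNReal.rpow_one]
    simp only [e] at hh
    have h2 := ENNReal.rpow_le_rpow ((enorm_fourierStft_le d hs hV hU x ξ).trans hh) hp0.le
    refine h2.trans (le_of_eq ?_)
    rw [ENNReal.mul_rpow_of_nonneg _ _ hp0.le, ← ENNReal.rpow_mul, ← ENNReal.rpow_mul,
      one_div_mul_cancel hp0.ne', ENNReal.rpow_one, sub_mul, one_div_mul_cancel hp0.ne', one_mul]
  calc _ ≤ ∫⁻ x, M ^ (p - 1) * ∫⁻ q, ρ q * G (x - q.2) ^ p ∂halfSpaceMeasure d :=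
        lintegral_mono jensen
    _ = M ^ (p - 1) * ∫⁻ q, (∫⁻ x, ρ q * G (x - q.2) ^ p) ∂halfSpaceMeasure d := by
        have hm : Measurable fun z : E d × (ℝ × E d) => ρ z.2 * G (z.1 - z.2.2) ^ p := by fun_prop
        rw [lintegral_const_mul _ (Measurable.lintegral_prod_right' hm),
          lintegral_lintegral_swap hm.aemeasurable]
    _ = M ^ (p - 1) * (M * ∫⁻ x, G x ^ p) := by
        congr 1
        rw [hMdef, ← lintegral_mul_const _ hρm]
        congr 1 with q
        rw [lintegral_const_mul _ (by fun_prop),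
          lintegral_sub_right_eq_self (fun x => G x ^ p) q.2]
    _ = M ^ p * ∫⁻ x, G x ^ p := by
        rw [← mul_assoc]
        congr 1
        nth_rw 2 [← ENNReal.rpow_one M]
        rw [← ENNReal.rpow_add_of_nonneg _ _ (by linarith) zero_le_one, sub_add_cancel]
    _ ≤ _ := by
        refine mul_le_mul_left ?_ _
        refine (ENNReal.rpow_le_rpow (hM ξ) hp0.le).trans (le_of_eq ?_)
        rw [ENNReal.mul_rpow_of_nonneg _ _ hp0.le,
          ENNReal.ofReal_rpow_of_nonneg (by positivity) hp0.le, ← Real.rpow_mul (by positivity),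
          neg_mul]

/-- The dilation `x ↦ x / (2π)`. -/
def dilation (d : ℕ) : E d ≃L[ℝ] E d :=
  ContinuousLinearEquiv.smulLeft (Units.mk0 ((2 * π)⁻¹ : ℝ) (by positivity))

lemma dilation_apply (d : ℕ) (x : E d) : dilation d x = (2 * π)⁻¹ • x := rfl

lemma integral_cexp_mul_eq_fourierInv (d : ℕ) (V : E d → ℂ) (x : E d) :
    ∫ ξ, Complex.exp (Complex.I * (⟪x, ξ⟫ : ℂ)) * V ξ = 𝓕⁻ V ((2 * π)⁻¹ • x) := by
  rw [Real.fourierInv_eq']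
  congr 1 with ξ
  rw [smul_eq_mul, real_inner_smul_right, real_inner_comm]
  congr 2
  push_cast
  field_simp

lemma exists_schwartz_weighted_FT (d : ℕ) (k : ℝ) (f : SchwartzMap (E d) ℂ) :
    ∃ V : SchwartzMap (E d) ℂ, ∀ η, V η = (((1 + ‖η‖ ^ 2) ^ (k / 2) : ℝ) : ℂ) * FT d f η := by
  refine ⟨SchwartzMap.smulLeftCLM ℂ (fun η : E d => (1 + ‖η‖ ^ 2) ^ (k / 2))
    (SchwartzMap.compCLMOfContinuousLinearEquiv ℂ (dilation d) (𝓕 f)), fun η => ?_⟩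
  rw [SchwartzMap.smulLeftCLM_apply_apply (by fun_prop), FT_eq_fourier]
  simp [SchwartzMap.fourier_coe, dilation_apply]

lemma exists_schwartz_bessel (d : ℕ) (k : ℝ) (f : SchwartzMap (E d) ℂ) :
    ∃ h : SchwartzMap (E d) ℂ, ∀ x, h x = bessel d k f x := by
  obtain ⟨V, hV⟩ := exists_schwartz_weighted_FT d k f
  refine ⟨(((2 * π) ^ d : ℝ) : ℂ)⁻¹ •
    SchwartzMap.compCLMOfContinuousLinearEquiv ℂ (dilation d) (𝓕⁻ V), fun x => ?_⟩
  simp only [bessel, mul_assoc, ← hV, integral_cexp_mul_eq_fourierInv]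
  simp [SchwartzMap.fourierInv_coe, dilation_apply]

lemma eq_integral_FT (d : ℕ) (f : SchwartzMap (E d) ℂ) (y : E d) :
    f y = (((2 * π) ^ d : ℝ) : ℂ)⁻¹ *
      ∫ η, Complex.exp (Complex.I * (⟪y, η⟫ : ℂ)) * FT d f η := by
  have h1 : f y = 𝓕⁻ (𝓕 (f : E d → ℂ)) y := by
    rw [f.continuous.fourierInv_fourier_eq f.integrable (𝓕 f).integrable]
  have h2 := Measure.integral_comp_inv_smul_of_nonneg (volume : Measure (E d))
    (fun ν => Complex.exp (Complex.I * ((2 * π * ⟪y, ν⟫ : ℝ) : ℂ)) * 𝓕 (f : E d → ℂ) ν)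
    (R := 2 * π) (by positivity)
  have h3 : ∫ η, Complex.exp (Complex.I * (⟪y, η⟫ : ℂ)) * FT d f η =
      ((2 * π) ^ d : ℝ) • ∫ ν, Complex.exp (Complex.I * ((2 * π * ⟪y, ν⟫ : ℝ) : ℂ)) *
        𝓕 (f : E d → ℂ) ν := by
    rw [finrank_euclideanSpace_fin] at h2
    rw [← h2]
    congr 1 with η
    rw [FT_eq_fourier, real_inner_smul_right, mul_inv_cancel_left₀ (by positivity)]
  rw [h3, h1, Real.fourierInv_eq', Complex.real_smul, inv_mul_cancel_left₀
    (by exact_mod_cast (by positivity : ((2 * π) ^ d : ℝ) ≠ 0))]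
  congr 1 with ν
  rw [smul_eq_mul, real_inner_comm]
  congr 2
  ring

/-- The Hardy–Littlewood–Paley inequality, including Plancherel's identity at `p = 2`. -/
lemma lintegral_weighted_FT_le (d : ℕ) (hd : 1 ≤ d) {p : ℝ} (hp1 : 1 < p) (hp2 : p ≤ 2) :
    ∃ C : ℝ≥0∞, C ≠ ⊤ ∧ ∀ F : E d → ℂ, Measurable F → Integrable F → MemLp F 2 →
      ∫⁻ ξ, ENNReal.ofReal ((1 + ‖ξ‖ ^ 2) ^ (-(d * (1 / p - 1 / 2) * p))) * ‖FT d F ξ‖ₑ ^ p ≤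
        C * ∫⁻ x, ‖F x‖ₑ ^ p := by
  rcases hp2.eq_or_lt with rfl | hp2
  · refine ⟨ENNReal.ofReal ((2 * π) ^ d), by finiteness, fun F _ h1 h2 => ?_⟩
    simpa using (plancherel_FT d h1 h2).le
  · obtain ⟨C, hC, h⟩ := paley_inequality d hd hp1 hp2
    refine ⟨C, hC, fun F hF h1 h2 => (le_of_eq ?_).trans (h F hF h1 h2)⟩
    have := measurable_paleyOp d h1
    rw [lintegral_paleyMeasure d (by fun_prop)]
    congr 1 with ξ
    rw [← ofReal_norm, ENNReal.ofReal_rpow_of_nonneg (by positivity) (by linarith),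
      ← ENNReal.ofReal_mul (by positivity), ← ENNReal.ofReal_mul (by positivity), paleyOp,
      Real.mul_rpow (by positivity) (by positivity), ← Real.rpow_mul (by positivity),
      mul_left_comm, mul_comm (_ ^ _ : ℝ), ← Real.rpow_natCast _ d, ← Real.rpow_neg (by positivity),
      ← Real.rpow_add (by positivity)]
    congr 3
    field_simp
    ring

lemma lintegral_lintegral_gaussian_rpow (d : ℕ) {b p : ℝ} (hb : 0 < b) (hp : 0 < p) :
    ∃ C : ℝ≥0∞, C ≠ ⊤ ∧ ∀ h : E d → ℂ, Measurable h →
      ∫⁻ x, (∫⁻ y, ‖h y * (rexp (-b * ‖y - x‖ ^ 2) : ℂ)‖ₑ ^ p) = C * ∫⁻ y, ‖h y‖ₑ ^ p := by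
  have hi : Integrable fun x : E d => rexp (-(b * p) * ‖x‖ ^ 2) := by
    simpa using integrable_gaussian_sub d (by positivity : 0 < b * p) 0
  refine ⟨∫⁻ x : E d, ENNReal.ofReal (rexp (-(b * p) * ‖x‖ ^ 2)), hi.lintegral_lt_top.ne,
    fun h hh => ?_⟩
  have e (x y : E d) : ‖h y * (rexp (-b * ‖y - x‖ ^ 2) : ℂ)‖ₑ ^ p =
      ENNReal.ofReal (rexp (-(b * p) * ‖y - x‖ ^ 2)) * ‖h y‖ₑ ^ p := by
    rw [enorm_mul, ENNReal.mul_rpow_of_nonneg _ _ hp.le, mul_comm, ← ofReal_norm (rexp _ : ℂ),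
      Complex.norm_real, Real.norm_of_nonneg (by positivity),
      ENNReal.ofReal_rpow_of_nonneg (by positivity) hp.le, ← Real.exp_mul]
    congr 3
    ring
  simp only [e]
  rw [lintegral_lintegral_swap (Measurable.aemeasurable (by fun_prop)),
    ← lintegral_const_mul _ (by fun_prop)]
  congr 1 with y
  rw [lintegral_mul_const _ (by fun_prop)]
  congr 1
  exact lintegral_sub_left_eq_self (fun x : E d => ENNReal.ofReal (rexp (-(b * p) * ‖x‖ ^ 2))) y

lemma measurable_FT_mul_gaussian (d : ℕ) (b : ℝ) {f : E d → ℂ} (hf : Measurable f)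
    {α : Type*} [MeasurableSpace α] {u v : α → E d} (hu : Measurable u) (hv : Measurable v) :
    Measurable fun z => FT d (fun y => f y * (rexp (-b * ‖y - u z‖ ^ 2) : ℂ)) (v z) := by
  have h : StronglyMeasurable fun q : α × E d =>
      Complex.exp (-Complex.I * (⟪q.2, v q.1⟫ : ℂ)) *
        (f q.2 * (rexp (-b * ‖q.2 - u q.1‖ ^ 2) : ℂ)) :=
    Measurable.stronglyMeasurable (by fun_prop)
  exact (h.integral_prod_right' (ν := volume)).measurable

/-- The Hardy–Littlewood–Paley inequality applied to all Gaussian localisations of `h`. -/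
lemma lintegral_weighted_FT_gaussian_le (d : ℕ) (hd : 1 ≤ d) {p : ℝ} (hp1 : 1 < p) (hp2 : p ≤ 2)
    {b : ℝ} (hb : 0 < b) :
    ∃ C : ℝ≥0∞, C ≠ ⊤ ∧ ∀ h : SchwartzMap (E d) ℂ,
      ∫⁻ x, (∫⁻ ξ, ENNReal.ofReal ((1 + ‖ξ‖ ^ 2) ^ (-(d * (1 / p - 1 / 2) * p))) *
        ‖FT d (fun y => h y * (rexp (-b * ‖y - x‖ ^ 2) : ℂ)) ξ‖ₑ ^ p) ≤
        C * ∫⁻ x, ‖h x‖ₑ ^ p := by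
  obtain ⟨C₁, hC₁, h₁⟩ := lintegral_weighted_FT_le d hd hp1 hp2
  obtain ⟨C₂, hC₂, h₂⟩ := lintegral_lintegral_gaussian_rpow d hb (by linarith : 0 < p)
  refine ⟨C₁ * C₂, by finiteness, fun h => ?_⟩
  have hm := h.continuous.measurable
  rw [mul_assoc C₁, ← h₂ h hm, ← lintegral_const_mul' _ _ hC₁]
  refine lintegral_mono fun x => ?_
  have hbd (y : E d) : ‖(rexp (-b * ‖y - x‖ ^ 2) : ℂ)‖ ≤ 1 := by
    rw [Complex.norm_real, Real.norm_of_nonneg (by positivity), Real.exp_le_one_iff]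
    nlinarith [mul_nonneg hb.le (sq_nonneg ‖y - x‖)]
  have hgm : AEStronglyMeasurable (fun y : E d => (rexp (-b * ‖y - x‖ ^ 2) : ℂ)) :=
    Continuous.aestronglyMeasurable (by fun_prop)
  refine h₁ _ (by fun_prop) (h.integrable.mul_bdd hgm (Eventually.of_forall hbd)) ?_
  refine (h.memLp 2).of_le (h.continuous.aestronglyMeasurable.mul hgm)
    (Eventually.of_forall fun y => ?_)
  rw [Pi.mul_apply, norm_mul]
  exact mul_le_of_le_one_right (norm_nonneg _) (hbd y)

lemma lintegral_stft_rpow_le (d : ℕ) (hd : 1 ≤ d) {p : ℝ} (hp1 : 1 < p) (hp2 : p ≤ 2) :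
    ∃ C : ℝ≥0∞, C ≠ ⊤ ∧ ∀ f h : SchwartzMap (E d) ℂ,
      (∀ x, h x = bessel d (2 * d * (1 / p - 1 / 2)) f x) →
      ∫⁻ z : P d, ‖stft d f z‖ₑ ^ p ≤ C * ∫⁻ x, ‖h x‖ₑ ^ p := by
  have hp0 : 0 < p := by linarith
  have hstft (f : SchwartzMap (E d) ℂ) : Measurable fun z : P d => stft d f z := by
    simp only [stft_eq_FT]
    exact measurable_FT_mul_gaussian d _ f.continuous.measurable measurable_fst measurable_snd
  rcases hp2.eq_or_lt with rfl | hp2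
  · obtain ⟨C, hC, key⟩ := lintegral_weighted_FT_gaussian_le d hd hp1 le_rfl
      (one_half_pos (α := ℝ))
    refine ⟨C, hC, fun f h hh => ?_⟩
    have hfh : h = f := by
      ext x
      rw [hh, eq_integral_FT d f x]
      simp [bessel]
    rw [Measure.volume_eq_prod, lintegral_prod _ ((hstft f).enorm.pow_const _).aemeasurable, hfh]
    simp only [stft_eq_FT]
    simpa using key f
  · set s : ℝ := d * (1 / p - 1 / 2) with hs_def
    have hs : 0 < s := by
      have : (0 : ℝ) < d := by exact_mod_cast hd
      have : 1 / 2 < 1 / p := one_div_lt_one_div_of_lt hp0 hp2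
      have : 0 < 1 / p - 1 / 2 := by linarith
      positivity
    obtain ⟨C₁, hC₁, h₁⟩ := lintegral_fourierStft_rpow_le d hs hp1
    obtain ⟨C₂, hC₂, h₂⟩ := lintegral_weighted_FT_gaussian_le d hd hp1 hp2.le one_pos
    set A : ℝ := ((2 * π) ^ d)⁻¹ * (π / (1 / 2)) ^ ((d : ℝ) / 2) with hA
    set B : ℝ := ((2 * π) ^ d)⁻¹ * (π / 1) ^ ((d : ℝ) / 2) with hB
    have hA0 : 0 < A := by positivity
    have hB0 : 0 < B := by positivity
    refine ⟨ENNReal.ofReal A ^ p * (C₁ * (ENNReal.ofReal B⁻¹ ^ p * C₂)), by finiteness,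
      fun f h hh => ?_⟩
    obtain ⟨V, hV⟩ := exists_schwartz_weighted_FT d (2 * s) f
    obtain ⟨U, hU⟩ := exists_schwartz_weighted_FT d 0 f
    have hVs (η : E d) : V η = (((1 + ‖η‖ ^ 2) ^ s : ℝ) : ℂ) * FT d f η := by
      rw [hV, mul_div_cancel_left₀ _ two_ne_zero]
    have hUF (η : E d) : U η = FT d f η := by simp [hU]
    have hUV (η : E d) : U η = (((1 + ‖η‖ ^ 2) ^ (-s) : ℝ) : ℂ) * V η := by
      rw [hUF, hVs, ← mul_assoc, ← Complex.ofReal_mul, ← Real.rpow_add (by positivity)]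
      simp
    have hfU (y : E d) : f y = (((2 * π) ^ d : ℝ) : ℂ)⁻¹ *
        ∫ η, Complex.exp (Complex.I * (⟪y, η⟫ : ℂ)) * U η := by
      simp only [hUF]
      exact eq_integral_FT d f y
    have hhV (y : E d) : h y = (((2 * π) ^ d : ℝ) : ℂ)⁻¹ *
        ∫ η, Complex.exp (Complex.I * (⟪y, η⟫ : ℂ)) * V η := by
      rw [hh, bessel, mul_assoc 2 (d : ℝ), ← hs_def]
      simp only [hV, mul_assoc]
    have e₁ (x ξ : E d) : ‖stft d f (x, ξ)‖ₑ ^ p =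
        ENNReal.ofReal A ^ p * ‖fourierStft d (1 / 2) U x ξ‖ₑ ^ p := by
      rw [stft_eq_FT, ← ofReal_norm, norm_FT_mul_gaussian d one_half_pos U.integrable hfU,
        ENNReal.ofReal_mul hA0.le, ENNReal.mul_rpow_of_nonneg _ _ hp0.le, ofReal_norm]
      norm_num
    have e₂ (x ξ : E d) : ‖fourierStft d (1 / 4) V x ξ‖ₑ ^ p = ENNReal.ofReal B⁻¹ ^ p *
        ‖FT d (fun y => h y * (rexp (-1 * ‖y - x‖ ^ 2) : ℂ)) ξ‖ₑ ^ p := by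
      rw [← ENNReal.mul_rpow_of_nonneg _ _ hp0.le, ← ofReal_norm (FT _ _ _),
        norm_FT_mul_gaussian d one_pos V.integrable hhV, ← ENNReal.ofReal_mul (by positivity),
        inv_mul_cancel_left₀ hB0.ne', ofReal_norm, mul_one]
    have hmFT := measurable_FT_mul_gaussian (α := E d × E d) d 1 h.continuous.measurable
      measurable_snd measurable_fst
    have hmFT' : Measurable fun z : E d × E d => ENNReal.ofReal ((1 + ‖z.1‖ ^ 2) ^ (-(s * p))) *
        ‖FT d (fun y => h y * (rexp (-1 * ‖y - z.2‖ ^ 2) : ℂ)) z.1‖ₑ ^ p :=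
      Measurable.mul (by fun_prop) (hmFT.enorm.pow_const p)
    calc ∫⁻ z : P d, ‖stft d f z‖ₑ ^ p
        = ∫⁻ ξ, (∫⁻ x, ‖stft d f (x, ξ)‖ₑ ^ p) := by
          rw [Measure.volume_eq_prod,
            lintegral_prod_symm _ ((hstft f).enorm.pow_const _).aemeasurable]
      _ = ENNReal.ofReal A ^ p * ∫⁻ ξ, (∫⁻ x, ‖fourierStft d (1 / 2) U x ξ‖ₑ ^ p) := by
          simp only [e₁]
          simp_rw [lintegral_const_mul' _ _ (by finiteness : ENNReal.ofReal A ^ p ≠ ⊤)]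
      _ ≤ ENNReal.ofReal A ^ p * ∫⁻ ξ, C₁ * (∫⁻ x, ENNReal.ofReal ((1 + ‖ξ‖ ^ 2) ^ (-(s * p))) *
            ‖fourierStft d (1 / 4) V x ξ‖ₑ ^ p) := by
          refine mul_le_mul_right (lintegral_mono fun ξ => ?_) _
          rw [lintegral_const_mul' _ _ ENNReal.ofReal_ne_top, ← mul_assoc]
          exact h₁ U V V.continuous.measurable V.integrable hUV ξ
      _ = ENNReal.ofReal A ^ p * (C₁ * (ENNReal.ofReal B⁻¹ ^ p *
            ∫⁻ ξ, (∫⁻ x, ENNReal.ofReal ((1 + ‖ξ‖ ^ 2) ^ (-(s * p))) *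
            ‖FT d (fun y => h y * (rexp (-1 * ‖y - x‖ ^ 2) : ℂ)) ξ‖ₑ ^ p))) := by
          simp only [e₂, mul_left_comm (ENNReal.ofReal (_ ^ (-(s * p))))]
          simp_rw [lintegral_const_mul' _ _ hC₁,
            lintegral_const_mul' _ _ (by finiteness : ENNReal.ofReal B⁻¹ ^ p ≠ ⊤)]
      _ ≤ ENNReal.ofReal A ^ p * (C₁ * (ENNReal.ofReal B⁻¹ ^ p * (C₂ * ∫⁻ x, ‖h x‖ₑ ^ p))) := by
          rw [lintegral_lintegral_swap]
          · gcongr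
            exact h₂ h
          · exact hmFT'.aemeasurable
      _ = _ := by ring

end GaussianStft

/-- the embedding `L^p_k ↪ M^p` for `1 < p ≤ 2`, `k = 2d(1/p - 1/2)`:
`‖V_g f‖_{L^p(ℝ^{2d})} ≤ C·‖(1-Δ)^{k/2} f‖_{L^p(ℝ^d)}` for Schwartz `f`. -/
theorem stmt6 (d : ℕ) (hd : 1 ≤ d) (p : ℝ) (hp1 : 1 < p) (hp2 : p ≤ 2)
    (k : ℝ) (hk : k = 2 * d * (1 / p - 1 / 2)) :
    ∃ C > (0 : ℝ), ∀ f : SchwartzMap (E d) ℂ,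
      (∫ z : P d, ‖stft d (⇑f) z‖ ^ p) ^ (1 / p) ≤
        C * (∫ x : E d, ‖bessel d k (⇑f) x‖ ^ p) ^ (1 / p) := by
  obtain ⟨C, hC, key⟩ := lintegral_stft_rpow_le d hd hp1 hp2
  have hp0 : 0 < p := by linarith
  refine ⟨(C.toReal + 1) ^ (1 / p), by positivity, fun f => ?_⟩
  obtain ⟨h, hh⟩ := exists_schwartz_bessel d k f
  have hk' := key f h (hk ▸ hh)
  simp only [← hh]
  have hint : Integrable fun x => ‖h x‖ ^ p := by
    have := (h.memLp (ENNReal.ofReal p)).integrable_norm_rpow (by simpa using hp0)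
      ENNReal.ofReal_ne_top
    rwa [ENNReal.toReal_ofReal hp0.le] at this
  have hr : ∫⁻ x, ‖h x‖ₑ ^ p = ENNReal.ofReal (∫ x, ‖h x‖ ^ p) := by
    rw [ofReal_integral_eq_lintegral_ofReal hint
      (Filter.Eventually.of_forall fun _ => by positivity)]
    congr 1 with x
    rw [← ofReal_norm, ENNReal.ofReal_rpow_of_nonneg (norm_nonneg _) hp0.le]
  have hmain : ∫ z : P d, ‖stft d f z‖ ^ p ≤ (C.toReal + 1) * ∫ x, ‖h x‖ ^ p := by
    have hI : 0 ≤ ∫ x, ‖h x‖ ^ p := integral_nonneg fun _ => by positivity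
    have hm : Measurable fun z : P d => stft d f z := by
      simp only [stft_eq_FT]
      exact measurable_FT_mul_gaussian d _ f.continuous.measurable measurable_fst measurable_snd
    rw [integral_eq_lintegral_of_nonneg_ae (Filter.Eventually.of_forall fun _ => by positivity)
      (hm.norm.pow_const p).aestronglyMeasurable]
    have e (z : P d) : ENNReal.ofReal (‖stft d f z‖ ^ p) = ‖stft d f z‖ₑ ^ p := by
      rw [← ofReal_norm, ENNReal.ofReal_rpow_of_nonneg (norm_nonneg _) hp0.le]
    simp only [e]
    rw [hr] at hk'
    refine (ENNReal.toReal_mono (by finiteness) hk').trans ?_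
    rw [ENNReal.toReal_mul, ENNReal.toReal_ofReal hI]
    linarith
  rw [← Real.mul_rpow (by positivity) (integral_nonneg fun _ => by positivity)]
  exact Real.rpow_le_rpow (integral_nonneg fun _ => by positivity) hmain (by positivity)
end
end

section
/- Let d ≥ 1 and 2 ≤ p < ∞. There exists a constant C > 0 such that for every Schwartz function f on ℝ^d: ‖V_g f‖_{L^p(ℝ^{2d})} ≤ C·‖f‖_{L^p(ℝ^d)}. -/
open MeasureTheory Complex Real
open scoped ENNReal RealInnerProductSpace

noncomputable section

lemma hasTemperateGrowth_gaussian (d : ℕ) (x : E d) :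
    (fun y : E d ↦ ((Real.exp (-‖y - x‖ ^ 2 / 2) : ℝ) : ℂ)).HasTemperateGrowth := by
  have hr : (Real.exp ∘ fun y : E d ↦ -‖y - x‖ ^ 2 / 2).HasTemperateGrowth := by
    refine Function.HasTemperateGrowth.comp' (t := Set.Iic 0) ?_ (uniqueDiffOn_Iic 0)
      Real.contDiff_exp.contDiffOn ?_ ?_
    · rintro _ ⟨y, rfl⟩
      simp only [Set.mem_Iic]
      have := sq_nonneg ‖y - x‖
      linarith
    · refine fun N ↦ ⟨0, 1, zero_le_one, fun n _ t ht ↦ ?_⟩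
      rw [norm_iteratedFDerivWithin_eq_norm_iteratedDerivWithin,
        iteratedDerivWithin_eq_iteratedDeriv (uniqueDiffOn_Iic 0)
          Real.contDiff_exp.contDiffAt ht, iteratedDeriv_eq_iterate, Real.iter_deriv_exp]
      simpa using ht
    · have : (fun y : E d ↦ -‖y - x‖ ^ 2 / 2) = fun y ↦ (-1 / 2 : ℝ) * ‖y - x‖ ^ 2 := by
        ext y; ring
      rw [this]
      have hsub : (fun y : E d ↦ y - x).HasTemperateGrowth := by fun_prop
      have hsq : (fun y : E d ↦ ‖y‖ ^ 2).HasTemperateGrowth := by fun_prop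
      exact (Function.HasTemperateGrowth.const _).mul (hsq.comp hsub)
  exact Function.HasTemperateGrowth.comp Function.Complex.hasTemperateGrowth_ofReal hr

/-- Plancherel's theorem for the Fourier transform with kernel `exp (-i y·ξ)`. -/
lemma lintegral_enorm_sq_integral_mul_cexp (d : ℕ) (k : SchwartzMap (E d) ℂ) :
    ∫⁻ ξ : E d, ‖∫ y, k y * Complex.exp (-Complex.I * (⟪y, ξ⟫ : ℂ))‖ₑ ^ 2 =
      ENNReal.ofReal ((2 * π) ^ d) * ∫⁻ y, ‖k y‖ₑ ^ 2 := by
  have hsq (q : SchwartzMap (E d) ℂ) : ∫⁻ y, ‖q y‖ₑ ^ 2 = ENNReal.ofReal (∫ y, ‖q y‖ ^ 2) := by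
    rw [ofReal_integral_eq_lintegral_ofReal]
    · refine lintegral_congr fun y ↦ ?_
      rw [ENNReal.ofReal_pow (norm_nonneg _), ofReal_norm]
    · exact (memLp_two_iff_integrable_sq_norm q.continuous.aestronglyMeasurable).1
        (q.memLp 2 volume)
    · exact .of_forall fun y ↦ by positivity
  have hF (ξ : E d) : ∫ y, k y * Complex.exp (-Complex.I * (⟪y, ξ⟫ : ℂ)) =
      (FourierTransform.fourier k) ((2 * π)⁻¹ • ξ) := by
    rw [SchwartzMap.fourier_coe, Real.fourier_eq']
    refine integral_congr_ae (.of_forall fun y ↦ ?_)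
    simp only [smul_eq_mul, mul_comm (k y), inner_smul_right]
    congr 2
    push_cast
    have : (π : ℂ) ≠ 0 := by exact_mod_cast Real.pi_ne_zero
    field_simp
  have hR : (2 * π)⁻¹ ≠ 0 := by positivity
  have hm : Measurable fun y ↦ ‖(FourierTransform.fourier k) y‖ₑ ^ 2 :=
    ((FourierTransform.fourier k).continuous.measurable.enorm).pow_const 2
  calc _ = ∫⁻ ξ : E d, ‖(FourierTransform.fourier k) ((2 * π)⁻¹ • ξ)‖ₑ ^ 2 := by simp_rw [hF]
    _ = ∫⁻ y, ‖(FourierTransform.fourier k) y‖ₑ ^ 2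
          ∂(Measure.map ((2 * π)⁻¹ • ·) (volume : Measure (E d))) :=
        (lintegral_map hm (measurable_const_smul _)).symm
    _ = _ := by
        rw [Measure.map_addHaar_smul volume hR, lintegral_smul_measure, smul_eq_mul, hsq, hsq,
          SchwartzMap.integral_norm_sq_fourier]
        congr 2
        rw [finrank_euclideanSpace_fin, inv_pow, inv_inv, abs_of_nonneg (by positivity)]

lemma norm_pkbar (d : ℕ) (z : P d) (y : E d) :
    ‖pkbar d z y‖ = Real.exp (-‖y - z.1‖ ^ 2 / 2) := by
  rw [pkbar, norm_mul, Complex.norm_exp, Complex.norm_real, Real.norm_eq_abs, Real.abs_exp]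
  simp

lemma continuous_pkbar (d : ℕ) : Continuous fun q : P d × E d ↦ pkbar d q.1 q.2 := by
  unfold pkbar
  fun_prop

lemma integrable_gaussian_sq_norm (d : ℕ) {b : ℝ} (hb : 0 < b) :
    Integrable fun y : E d ↦ Real.exp (-b * ‖y‖ ^ 2) := by
  refine ((GaussianFourier.integrable_cexp_neg_mul_sq_norm_add (V := E d) (b := (b : ℂ))
    (by simpa using hb) 0 0).norm).congr (.of_forall fun y ↦ ?_)
  simp only [Complex.norm_exp]
  congr 1
  simp [← Complex.ofReal_pow]

lemma integrable_pkbar (d : ℕ) (z : P d) : Integrable (pkbar d z) := by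
  have h := (integrable_gaussian_sq_norm d (b := 1 / 2) (by norm_num)).comp_sub_right z.1
  refine h.mono' ((continuous_pkbar d).comp (by fun_prop :
    Continuous fun y : E d ↦ (z, y))).aestronglyMeasurable (.of_forall fun y ↦ ?_)
  rw [norm_pkbar]
  exact le_of_eq (by congr 1; ring)

lemma integral_norm_pkbar (d : ℕ) (z : P d) :
    ∫ y, ‖pkbar d z y‖ = ∫ y : E d, Real.exp (-‖y‖ ^ 2 / 2) := by
  simp_rw [norm_pkbar]
  exact integral_sub_right_eq_self (fun y : E d ↦ Real.exp (-‖y‖ ^ 2 / 2)) z.1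

lemma integral_gaussian_pos (d : ℕ) : 0 < ∫ y : E d, Real.exp (-‖y‖ ^ 2 / 2) := by
  have h := GaussianFourier.integral_rexp_neg_mul_sq_norm (V := E d) (b := 1 / 2) (by norm_num)
  have : ∀ y : E d, -‖y‖ ^ 2 / 2 = -(1 / 2) * ‖y‖ ^ 2 := fun y ↦ by ring
  simp_rw [this, h]
  positivity

lemma stronglyMeasurable_stft (d : ℕ) {h : E d → ℂ} (hh : Continuous h) :
    StronglyMeasurable (stft d h) := by
  have : Continuous fun q : P d × E d ↦ h q.2 * pkbar d q.1 q.2 :=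
    (hh.comp continuous_snd).mul (continuous_pkbar d)
  exact this.stronglyMeasurable.integral_prod_right'

/-- The `L²` bound for the short-time Fourier transform. -/
lemma exists_lintegral_stft_sq_le (d : ℕ) : ∃ C : ℝ≥0∞, C ≠ ∞ ∧ ∀ h : SchwartzMap (E d) ℂ,
    ∫⁻ z, ‖stft d h z‖ₑ ^ 2 ≤ C * ∫⁻ y, ‖h y‖ₑ ^ 2 := by
  set G : E d → ℝ≥0∞ := fun y ↦ ‖Real.exp (-‖y‖ ^ 2 / 2)‖ₑ ^ 2 with hG
  have hGc : Continuous G := by fun_prop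
  have hGint : ∫⁻ y, G y ≠ ∞ := by
    have h1 := (integrable_gaussian_sq_norm d (b := 1) one_pos).2
    refine ne_of_lt (lt_of_eq_of_lt (lintegral_congr fun y ↦ ?_) h1)
    simp only [hG]
    rw [← enorm_pow, ← Real.exp_nat_mul]
    congr 2
    push_cast
    ring
  refine ⟨ENNReal.ofReal ((2 * π) ^ d) * ∫⁻ y, G y,
    ENNReal.mul_ne_top ENNReal.ofReal_ne_top hGint, fun h ↦ ?_⟩
  have hslice (x : E d) : ∫⁻ ξ, ‖stft d h (x, ξ)‖ₑ ^ 2 =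
      ENNReal.ofReal ((2 * π) ^ d) * ∫⁻ y, ‖h y‖ₑ ^ 2 * G (y - x) := by
    have hg := hasTemperateGrowth_gaussian d x
    have hk := lintegral_enorm_sq_integral_mul_cexp d
      (SchwartzMap.smulLeftCLM ℂ (fun y : E d ↦ ((Real.exp (-‖y - x‖ ^ 2 / 2) : ℝ) : ℂ)) h)
    simp only [SchwartzMap.smulLeftCLM_apply_apply hg, smul_eq_mul] at hk
    calc _ = _ := lintegral_congr fun ξ ↦ by
            congr 2
            refine integral_congr_ae (.of_forall fun y ↦ ?_)
            simp only [pkbar]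
            ring
      _ = _ := hk
      _ = _ := by
        congr 1
        refine lintegral_congr fun y ↦ ?_
        rw [enorm_mul, mul_pow, mul_comm, hG]
        congr 2
        simp only [← ofReal_norm, Complex.norm_real]
  have hhm : Measurable fun y ↦ ‖h y‖ₑ ^ 2 := h.continuous.measurable.enorm.pow_const 2
  have hm : Measurable fun q : E d × E d ↦ ‖h q.2‖ₑ ^ 2 * G (q.2 - q.1) :=
    (hhm.comp measurable_snd).mul (hGc.measurable.comp (measurable_snd.sub measurable_fst))
  rw [Measure.volume_eq_prod, lintegral_prod _
    ((stronglyMeasurable_stft d h.continuous).measurable.enorm.pow_const 2).aemeasurable]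
  simp_rw [hslice]
  rw [lintegral_const_mul _ hm.lintegral_prod_right', lintegral_lintegral_swap hm.aemeasurable,
    mul_assoc]
  gcongr
  rw [← lintegral_const_mul _ hhm]
  refine lintegral_mono fun y ↦ ?_
  have hGy : Measurable fun x ↦ G (y - x) :=
    hGc.measurable.comp (measurable_const.sub measurable_id)
  dsimp only
  rw [lintegral_const_mul _ hGy,
    lintegral_sub_left_eq_self G y, mul_comm]

/-- Smooth truncation: a Schwartz function is approximated, up to a uniformly small error, by a
Schwartz function supported where the original function is large. -/
lemma SchwartzMap.exists_truncation {d : ℕ} (f : SchwartzMap (E d) ℂ) {ε : ℝ} (hε : 0 < ε) :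
    ∃ h : SchwartzMap (E d) ℂ, (∀ x, ‖f x - h x‖ ≤ 2 * ε) ∧ (∀ x, ‖h x‖ ≤ ‖f x‖) ∧
      ∀ x, ‖f x‖ < ε → h x = 0 := by
  set φ : E d → ℝ := fun x ↦ Real.smoothTransition (‖f x‖ ^ 2 / ε ^ 2 - 1) with hφ
  have hφ0 (x) (hx : ‖f x‖ < ε) : φ x = 0 := by
    refine Real.smoothTransition.zero_of_nonpos ?_
    rw [sub_nonpos, div_le_one (by positivity)]
    gcongr
  have hsmooth : ContDiff ℝ (⊤ : ℕ∞) fun x ↦ (φ x : ℂ) * f x := by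
    have h1 : ContDiff ℝ (⊤ : ℕ∞) φ :=
      Real.smoothTransition.contDiff.comp
        ((((f.smooth ⊤).norm_sq ℝ).div_const _).sub contDiff_const)
    exact (Complex.ofRealCLM.contDiff.comp h1).mul (f.smooth ⊤)
  have hsupp : HasCompactSupport fun x ↦ (φ x : ℂ) * f x := by
    have h0 : ∀ᶠ x in Filter.cocompact (E d), ‖f x‖ < ε := by
      have := (ZeroAtInftyContinuousMapClass.zero_at_infty f).norm
      rw [norm_zero] at this
      exact this.eventually_lt_const hε
    obtain ⟨K, hK, hK'⟩ := Filter.mem_cocompact.1 h0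
    refine HasCompactSupport.intro hK fun x hx ↦ ?_
    rw [hφ0 x (hK' hx)]
    simp
  refine ⟨hsupp.toSchwartzMap hsmooth, fun x ↦ ?_, fun x ↦ ?_, fun x hx ↦ ?_⟩
  · change ‖f x - (φ x : ℂ) * f x‖ ≤ _
    have h1 : f x - (φ x : ℂ) * f x = ((1 - φ x : ℝ) : ℂ) * f x := by push_cast; ring
    rw [h1, norm_mul, Complex.norm_real, Real.norm_of_nonneg
      (sub_nonneg.2 (Real.smoothTransition.le_one _))]
    rcases le_or_gt ‖f x‖ (2 * ε) with h | h
    · exact (mul_le_of_le_one_left (norm_nonneg _)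
        (by linarith [Real.smoothTransition.nonneg (‖f x‖ ^ 2 / ε ^ 2 - 1)])).trans h
    · have : φ x = 1 := by
        refine Real.smoothTransition.one_of_one_le ?_
        rw [le_sub_iff_add_le, le_div_iff₀ (by positivity)]
        nlinarith
      rw [show Real.smoothTransition (‖f x‖ ^ 2 / ε ^ 2 - 1) = 1 from this]
      simp [hε.le]
  · change ‖(φ x : ℂ) * f x‖ ≤ _
    rw [norm_mul, Complex.norm_real, Real.norm_of_nonneg (Real.smoothTransition.nonneg _)]
    exact mul_le_of_le_one_left (norm_nonneg _) (Real.smoothTransition.le_one _)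
  · change (φ x : ℂ) * f x = 0
    simp [hφ0 x hx]

lemma integrable_schwartz_mul_pkbar {d : ℕ} (f : SchwartzMap (E d) ℂ) (z : P d) :
    Integrable fun y ↦ f y * pkbar d z y := by
  obtain ⟨C, hC⟩ := f.decay 0 0
  refine (integrable_pkbar d z).bdd_mul (c := C) f.continuous.aestronglyMeasurable
    (.of_forall fun y ↦ ?_)
  simpa using hC.2 y

lemma norm_stft_sub_le {d : ℕ} (f h : SchwartzMap (E d) ℂ) {δ : ℝ}
    (hδ : ∀ x, ‖f x - h x‖ ≤ δ) (z : P d) :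
    ‖stft d f z - stft d h z‖ ≤ δ * ∫ y : E d, Real.exp (-‖y‖ ^ 2 / 2) := by
  rw [stft, stft, ← integral_sub (integrable_schwartz_mul_pkbar f z)
    (integrable_schwartz_mul_pkbar h z), ← integral_norm_pkbar d z, ← integral_const_mul]
  refine norm_integral_le_of_norm_le ((integrable_pkbar d z).norm.const_mul δ)
    (.of_forall fun y ↦ ?_)
  rw [← sub_mul, norm_mul]
  gcongr
  exact hδ y

/-- Weak-type estimate for the level sets of the short-time Fourier transform. -/
lemma volume_lt_norm_stft_le {d : ℕ} {C : ℝ≥0∞}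
    (hC : ∀ h : SchwartzMap (E d) ℂ, ∫⁻ z, ‖stft d h z‖ₑ ^ 2 ≤ C * ∫⁻ y, ‖h y‖ₑ ^ 2)
    {G : ℝ} (hG : G = ∫ y : E d, Real.exp (-‖y‖ ^ 2 / 2)) (f : SchwartzMap (E d) ℂ)
    {t : ℝ} (ht : 0 < t) :
    volume {z | t < ‖stft d f z‖} ≤ ENNReal.ofReal (4 * t ^ (-2 : ℝ)) *
      (C * ∫⁻ x, (Set.Iic (4 * G * ‖f x‖)).indicator 1 t * ‖f x‖ₑ ^ 2) := by
  have hG0 : 0 < G := hG ▸ integral_gaussian_pos d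
  obtain ⟨h, h1, h2, h3⟩ := f.exists_truncation (ε := t / (4 * G)) (by positivity)
  have hsub : {z | t < ‖stft d f z‖} ⊆ {z | ENNReal.ofReal ((t / 2) ^ 2) ≤ ‖stft d h z‖ₑ ^ 2} := by
    intro z hz
    have hd := norm_stft_sub_le f h h1 z
    rw [← hG] at hd
    have he : 2 * (t / (4 * G)) * G = t / 2 := by field_simp; norm_num
    rw [he] at hd
    have h4 : t / 2 ≤ ‖stft d h z‖ := by
      have := norm_sub_norm_le (stft d f z) (stft d h z)
      have hz' : t < ‖stft d f z‖ := hz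
      linarith
    rw [Set.mem_ofPred_eq, ← ofReal_norm, ← ENNReal.ofReal_pow (norm_nonneg _)]
    gcongr
  have hmeas : Measurable fun z ↦ ‖stft d h z‖ₑ ^ 2 :=
    (stronglyMeasurable_stft d h.continuous).measurable.enorm.pow_const 2
  have hpos : 0 < (t / 2) ^ 2 := by positivity
  calc _ ≤ _ := measure_mono hsub
    _ ≤ (∫⁻ z, ‖stft d h z‖ₑ ^ 2) / ENNReal.ofReal ((t / 2) ^ 2) :=
      meas_ge_le_lintegral_div hmeas.aemeasurable (by simpa using ht.ne') ENNReal.ofReal_ne_top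
    _ = ENNReal.ofReal (4 * t ^ (-2 : ℝ)) * ∫⁻ z, ‖stft d h z‖ₑ ^ 2 := by
      rw [ENNReal.div_eq_inv_mul, ← ENNReal.ofReal_inv_of_pos hpos]
      congr 2
      rw [Real.rpow_neg ht.le, Real.rpow_two]
      field_simp
      norm_num
    _ ≤ _ := by
      gcongr
      refine (hC h).trans ?_
      gcongr with x
      by_cases hx : ‖f x‖ < t / (4 * G)
      · simp [h3 x hx]
      · rw [Set.indicator_of_mem]
        · simp only [Pi.one_apply, one_mul, ← ofReal_norm]
          gcongr
          exact h2 x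
        · rw [not_lt, div_le_iff₀ (by positivity)] at hx
          rw [Set.mem_Iic]
          linarith

lemma lintegral_Ioi_rpow_mul_indicator {q a : ℝ} (hq : 0 < q) (ha : 0 ≤ a) :
    ∫⁻ t in Set.Ioi (0 : ℝ), ENNReal.ofReal (t ^ (q - 1)) * (Set.Iic a).indicator 1 t =
      ENNReal.ofReal (a ^ q / q) := by
  have h1 : ∀ t, ENNReal.ofReal (t ^ (q - 1)) * (Set.Iic a).indicator 1 t =
      (Set.Iic a).indicator (fun t : ℝ ↦ ENNReal.ofReal (t ^ (q - 1))) t := by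
    intro t
    by_cases ht : t ∈ Set.Iic a <;> simp [ht]
  simp_rw [h1]
  rw [lintegral_indicator measurableSet_Iic, Measure.restrict_restrict measurableSet_Iic,
    Set.inter_comm, Set.Ioi_inter_Iic]
  have hi : IntervalIntegrable (fun t : ℝ ↦ t ^ (q - 1)) volume 0 a :=
    intervalIntegral.intervalIntegrable_rpow' (by linarith)
  rw [intervalIntegrable_iff_integrableOn_Ioc_of_le ha] at hi
  rw [← ofReal_integral_eq_lintegral_ofReal hi, ← intervalIntegral.integral_of_le ha,
    integral_rpow (.inl (by linarith))]
  · simp [hq.ne']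
  · exact (ae_restrict_iff' measurableSet_Ioc).2 (.of_forall fun t ht ↦ Real.rpow_nonneg ht.1.le _)

/-- The modulation space embedding for lower Lebesgue integrals. -/
lemma exists_lintegral_stft_rpow_le (d : ℕ) {p : ℝ} (hp : 2 ≤ p) :
    ∃ K : ℝ≥0∞, K ≠ ∞ ∧ ∀ f : SchwartzMap (E d) ℂ,
      ∫⁻ z, ENNReal.ofReal (‖stft d f z‖ ^ p) ≤ K * ∫⁻ x, ENNReal.ofReal (‖f x‖ ^ p) := by
  obtain ⟨C, hCtop, hC⟩ := exists_lintegral_stft_sq_le d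
  rcases hp.eq_or_lt with rfl | hp
  · refine ⟨C, hCtop, fun f ↦ ?_⟩
    simpa [ENNReal.ofReal_pow, ofReal_norm] using hC f
  obtain ⟨G, hG⟩ : ∃ G, G = ∫ y : E d, Real.exp (-‖y‖ ^ 2 / 2) := ⟨_, rfl⟩
  have hG0 : 0 < G := hG ▸ integral_gaussian_pos d
  have hq : 0 < p - 2 := by linarith
  refine ⟨ENNReal.ofReal p * (ENNReal.ofReal 4 * C *
    ENNReal.ofReal ((4 * G) ^ (p - 2) / (p - 2))), by finiteness, fun f ↦ ?_⟩
  have hfm : Measurable fun x ↦ ‖f x‖ₑ ^ 2 := f.continuous.measurable.enorm.pow_const 2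
  set F : ℝ → E d → ℝ≥0∞ := fun t x ↦
    ENNReal.ofReal (t ^ (p - 2 - 1)) * (Set.Iic (4 * G * ‖f x‖)).indicator 1 t * ‖f x‖ₑ ^ 2
    with hF
  have hind : Measurable fun r : ℝ × E d ↦
      (Set.Iic (4 * G * ‖f r.2‖)).indicator (1 : ℝ → ℝ≥0∞) r.1 := by
    have : MeasurableSet {r : ℝ × E d | r.1 ≤ 4 * G * ‖f r.2‖} :=
      measurableSet_le measurable_fst (by fun_prop)
    exact measurable_one.indicator this
  have hind1 (t : ℝ) : Measurable fun x : E d ↦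
      (Set.Iic (4 * G * ‖f x‖)).indicator (1 : ℝ → ℝ≥0∞) t :=
    hind.comp (measurable_prodMk_left (x := t))
  have hpow : Measurable fun t : ℝ ↦ ENNReal.ofReal (t ^ (p - 2 - 1)) :=
    (measurable_id.pow_const _).ennreal_ofReal
  have hFm : Measurable (Function.uncurry F) :=
    ((hpow.comp measurable_fst).mul hind).mul (hfm.comp measurable_snd)
  have hbound : ∀ t ∈ Set.Ioi (0 : ℝ), volume {z | t < ‖stft d f z‖} *
      ENNReal.ofReal (t ^ (p - 1)) ≤ ENNReal.ofReal 4 * C * ∫⁻ x, F t x := by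
    intro t (ht : 0 < t)
    refine (mul_le_mul_left (volume_lt_norm_stft_le hC hG f ht) _).trans (le_of_eq ?_)
    have h1 : ∫⁻ x, F t x = ENNReal.ofReal (t ^ (p - 2 - 1)) *
        ∫⁻ x, (Set.Iic (4 * G * ‖f x‖)).indicator 1 t * ‖f x‖ₑ ^ 2 := by
      rw [← lintegral_const_mul _ (show Measurable fun x ↦
        (Set.Iic (4 * G * ‖f x‖)).indicator 1 t * ‖f x‖ₑ ^ 2 from (hind1 t).mul hfm)]
      simp_rw [hF, mul_assoc]
    have h2 : t ^ (p - 2 - 1) = t ^ (-2 : ℝ) * t ^ (p - 1) := by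
      rw [← Real.rpow_add ht]
      congr 1
      ring
    rw [h1, h2, ENNReal.ofReal_mul (by positivity), ENNReal.ofReal_mul (by positivity)]
    ring
  calc _ = ENNReal.ofReal p * ∫⁻ t in Set.Ioi 0, volume {z | t < ‖stft d f z‖} *
          ENNReal.ofReal (t ^ (p - 1)) :=
        lintegral_rpow_eq_lintegral_meas_lt_mul volume (.of_forall fun z ↦ norm_nonneg _)
          (stronglyMeasurable_stft d f.continuous).measurable.norm.aemeasurable (by linarith)
    _ ≤ ENNReal.ofReal p * ∫⁻ t in Set.Ioi 0, ENNReal.ofReal 4 * C * ∫⁻ x, F t x := by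
        gcongr 1
        exact setLIntegral_mono' measurableSet_Ioi hbound
    _ = ENNReal.ofReal p * (ENNReal.ofReal 4 * C * ∫⁻ x, ∫⁻ t in Set.Ioi 0, F t x) := by
        rw [lintegral_const_mul _ (show Measurable fun t ↦ ∫⁻ x, F t x from
            hFm.lintegral_prod_right'), lintegral_lintegral_swap hFm.aemeasurable]
    _ = _ := by
        have h3 (x : E d) : ∫⁻ t in Set.Ioi 0, F t x =
            ENNReal.ofReal ((4 * G) ^ (p - 2) / (p - 2)) * ENNReal.ofReal (‖f x‖ ^ p) := by
          simp only [hF]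
          rw [lintegral_mul_const _ (show Measurable fun t : ℝ ↦ ENNReal.ofReal (t ^ (p - 2 - 1)) *
              (Set.Iic (4 * G * ‖f x‖)).indicator 1 t from
              hpow.mul (measurable_one.indicator measurableSet_Iic)),
            lintegral_Ioi_rpow_mul_indicator hq (by positivity), ← ofReal_norm,
            ← ENNReal.ofReal_pow (norm_nonneg _), ← ENNReal.ofReal_mul (by positivity),
            ← ENNReal.ofReal_mul (by positivity), Real.mul_rpow (by positivity) (norm_nonneg _)]
          have h4 : ‖f x‖ ^ p = ‖f x‖ ^ (p - 2) * ‖f x‖ ^ 2 := by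
            rw [← Real.rpow_two, ← Real.rpow_add_of_nonneg (norm_nonneg _) hq.le zero_le_two]
            congr 1
            ring
          rw [h4]
          congr 1
          ring
        simp_rw [h3]
        rw [lintegral_const_mul _
          (f.continuous.measurable.norm.pow_const p).ennreal_ofReal]
        ring

/-- the embedding `L^p ↪ M^p` for `2 ≤ p < ∞`:
`‖V_g f‖_{L^p(ℝ^{2d})} ≤ C·‖f‖_{L^p(ℝ^d)}` for Schwartz `f`. -/
theorem stmt7 (d : ℕ) (hd : 1 ≤ d) (p : ℝ) (hp : 2 ≤ p) :
    ∃ C > (0 : ℝ), ∀ f : SchwartzMap (E d) ℂ,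
      (∫ z : P d, ‖stft d (⇑f) z‖ ^ p) ^ (1 / p) ≤
        C * (∫ x : E d, ‖f x‖ ^ p) ^ (1 / p) := by
  obtain ⟨K, hK, hle⟩ := exists_lintegral_stft_rpow_le d hp
  have hp0 : 0 < p := by linarith
  refine ⟨(K.toReal + 1) ^ (1 / p), by positivity, fun f ↦ ?_⟩
  have hfi : Integrable fun x ↦ ‖f x‖ ^ p := by
    have := (f.memLp (ENNReal.ofReal p) volume).integrable_norm_rpow
      (by simpa using hp0) ENNReal.ofReal_ne_top
    rwa [ENNReal.toReal_ofReal hp0.le] at this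
  have hnn : 0 ≤ ∫ x, ‖f x‖ ^ p := integral_nonneg fun x ↦ by positivity
  rw [← Real.mul_rpow (by positivity) hnn]
  refine Real.rpow_le_rpow (integral_nonneg fun z ↦ by positivity) ?_ (by positivity)
  have hmain : ∫ z : P d, ‖stft d f z‖ ^ p ≤ K.toReal * ∫ x, ‖f x‖ ^ p := by
    rw [integral_eq_lintegral_of_nonneg_ae (.of_forall fun z ↦ by positivity)
      ((stronglyMeasurable_stft d f.continuous).measurable.norm.pow_const p).aestronglyMeasurable]
    refine ENNReal.toReal_le_of_le_ofReal (by positivity) ((hle f).trans (le_of_eq ?_))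
    rw [ENNReal.ofReal_mul ENNReal.toReal_nonneg, ENNReal.ofReal_toReal hK,
      ofReal_integral_eq_lintegral_ofReal hfi (.of_forall fun x ↦ by positivity)]
  linarith
end
end
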